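/- Fix r ∈ ℕ and f = (f₁,…,f_r) ∈ ℕ^r, and set d = f₁ + ⋯ + f_r. Then there exists a rational function W_f(X,Y) ∈ ℚ(X,Y), depending only on f, with the following properties. (1) For every number field K of degree d with ring of integers 𝓞, and every rational prime p which is unramified in K and decomposes as p𝓞 = 𝔓₁⋯𝔓_r into r distinct prime ideals with inertia degrees f₁,…,f_r, the local normal zeta function of the Heisenberg group H(𝓞) at p equals W_f evaluated at (p, Y): that is, as formal power series, ∑_{i≥0} a^⊲_{p^i}(H(𝓞))·Y^i = W_f(p, Y). (2) W_f satisfies the functional equation W_f(X^{−1}, Y^{−1}) = (−1)^{3d}·X^{binom(3d,2)}·Y^{5d}·W_f(X, Y) in ℚ(X,Y). -/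

import Mathlib

/-- The Heisenberg group over a commutative ring `R`: the group of upper unitriangular
`3 × 3` matrices `![![1, x, z], ![0, 1, y], ![0, 0, 1]]` with entries in `R`,
encoded by the entry triple `(x, y, z)` with the matrix multiplication law. -/
@[ext]
structure Heisenberg (R : Type*) [CommRing R] where
  x : R
  y : R
  z : R

namespace Heisenberg

variable {R : Type*} [CommRing R]

instance : Mul (Heisenberg R) :=
  ⟨fun a b => ⟨a.x + b.x, a.y + b.y, a.z + b.z + a.x * b.y⟩⟩

instance : One (Heisenberg R) := ⟨⟨0, 0, 0⟩⟩

instance : Inv (Heisenberg R) :=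
  ⟨fun a => ⟨-a.x, -a.y, a.x * a.y - a.z⟩⟩

lemma mul_def (a b : Heisenberg R) :
    a * b = ⟨a.x + b.x, a.y + b.y, a.z + b.z + a.x * b.y⟩ := rfl

lemma one_def : (1 : Heisenberg R) = ⟨0, 0, 0⟩ := rfl

lemma inv_def (a : Heisenberg R) : a⁻¹ = ⟨-a.x, -a.y, a.x * a.y - a.z⟩ := rfl

instance : Group (Heisenberg R) where
  mul_assoc a b c := by
    simp only [mul_def, mk.injEq]
    refine ⟨by ring, by ring, by ring⟩
  one_mul a := by ext <;> simp [mul_def, one_def]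
  mul_one a := by ext <;> simp [mul_def, one_def]
  inv_mul_cancel a := by
    simp only [mul_def, inv_def, one_def, mk.injEq]
    refine ⟨by ring, by ring, by ring⟩

end Heisenberg

/-- The number of normal subgroups of index `n` in a group `G`. -/
noncomputable def normalSubgroupCount (G : Type*) [Group G] (n : ℕ) : ℕ :=
  Nat.card {H : Subgroup G // H.Normal ∧ H.index = n}

/-- Substitution of two elements of the rational function field `ℚ(X,Y)` (realized as the
fraction field of `ℚ[X,Y]`) into a polynomial `P ∈ ℚ[X,Y]`. -/
noncomputable def ratFunSubst (P : MvPolynomial (Fin 2) ℚ)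
    (x y : FractionRing (MvPolynomial (Fin 2) ℚ)) : FractionRing (MvPolynomial (Fin 2) ℚ) :=
  MvPolynomial.eval₂ ((algebraMap (MvPolynomial (Fin 2) ℚ) _).comp MvPolynomial.C) ![x, y] P

/-- The polynomial in `Y` obtained from `W ∈ ℚ[X,Y]` by substituting `X = p`. -/
noncomputable def evalAtPrime (W : MvPolynomial (Fin 2) ℚ) (p : ℕ) : Polynomial ℚ :=
  MvPolynomial.aeval ![Polynomial.C (p : ℚ), Polynomial.X] W

/-! ## Gaussian binomials -/

namespace HeisZeta

open Finset

/-- Gaussian binomial coefficients, defined by the Pascal recursion. -/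
def gauss {A : Type*} [CommRing A] (q : A) : ℕ → ℕ → A
  | _, 0 => 1
  | 0, _ + 1 => 0
  | n + 1, k + 1 => gauss q n k + q ^ (k + 1) * gauss q n (k + 1)

section gauss

variable {A : Type*} [CommRing A] (q : A)

@[simp] lemma gauss_zero_right (n : ℕ) : gauss q n 0 = 1 := by cases n <;> rfl

@[simp] lemma gauss_zero_succ (k : ℕ) : gauss q 0 (k + 1) = 0 := rfl

lemma gauss_succ_succ (n k : ℕ) :
    gauss q (n + 1) (k + 1) = gauss q n k + q ^ (k + 1) * gauss q n (k + 1) := rfl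

lemma gauss_eq_zero {n k : ℕ} (h : n < k) : gauss q n k = 0 := by
  induction n generalizing k with
  | zero => cases k with
    | zero => omega
    | succ k => rfl
  | succ n ih => cases k with
    | zero => omega
    | succ k => rw [gauss_succ_succ, ih (by omega), ih (by omega)]; simp

@[simp] lemma gauss_self (n : ℕ) : gauss q n n = 1 := by
  induction n with
  | zero => rfl
  | succ n ih => rw [gauss_succ_succ, ih, gauss_eq_zero q (Nat.lt_succ_self n)]; simp

lemma map_gauss {B : Type*} [CommRing B] (φ : A →+* B) (n k : ℕ) :
    φ (gauss q n k) = gauss (φ q) n k := by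
  induction n generalizing k with
  | zero => cases k <;> simp
  | succ n ih => cases k with
    | zero => simp
    | succ k => simp [gauss_succ_succ, ih]

/-- `∏_{i=1}^n (q^i - 1)`. -/
def qfac (n : ℕ) : A := ∏ i ∈ range n, (q ^ (i + 1) - 1)

lemma qfac_succ (n : ℕ) : qfac q (n + 1) = qfac q n * (q ^ (n + 1) - 1) := by
  simp [qfac, prod_range_succ]

lemma gauss_mul_qfac (n k : ℕ) :
    gauss q (n + k) k * qfac q k * qfac q n = qfac q (n + k) := by
  induction h : n + k generalizing n k with
  | zero =>
    obtain ⟨rfl, rfl⟩ : n = 0 ∧ k = 0 := by omega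
    simp [qfac]
  | succ N ih =>
    cases k with
    | zero =>
      obtain rfl : n = N + 1 := by omega
      simp [qfac]
    | succ k =>
      obtain rfl : N = n + k := by omega
      rw [gauss_succ_succ]
      have h1 := ih n k rfl
      cases n with
      | zero =>
        simp only [Nat.zero_add] at h1 ⊢
        rw [gauss_eq_zero q (Nat.lt_succ_self k)]
        simp [qfac]
      | succ n =>
        have h2 := ih n (k + 1) (by omega)
        have e : n + 1 + k + 1 = (n + 1) + (k + 1) := by omega
        rw [qfac_succ q (n + 1 + k)]
        have h3 : qfac q (n + 1) = qfac q n * (q ^ (n + 1) - 1) := qfac_succ q n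
        have h4 : qfac q (k + 1) = qfac q k * (q ^ (k + 1) - 1) := qfac_succ q k
        have e5 : q ^ (n + 1 + k + 1) = q ^ (k + 1) * q ^ (n + 1) := by ring
        calc _ = (gauss q (n + 1 + k) k * qfac q k * qfac q (n + 1)) * (q ^ (k + 1) - 1)
              + q ^ (k + 1) * (q ^ (n + 1) - 1) *
                (gauss q (n + 1 + k) (k + 1) * qfac q (k + 1) * qfac q n) := by
              rw [h4, h3]; ring
          _ = _ := by rw [h1, h2, e5]; ring

/-- Product formula used for counting subspaces. -/
lemma gauss_mul_prod (n k : ℕ) :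
    gauss q n k * ∏ i ∈ range k, (q ^ k - q ^ i) = ∏ i ∈ range k, (q ^ n - q ^ i) := by
  induction n generalizing k with
  | zero =>
    cases k with
    | zero => simp
    | succ k =>
      rw [gauss_zero_succ, zero_mul, eq_comm]
      exact prod_eq_zero (i := 0) (by simp) (by simp)
  | succ n ih =>
    cases k with
    | zero => simp
    | succ k =>
      have a1 : ∏ i ∈ range (k + 1), (q ^ (k + 1) - q ^ i)
          = (q ^ (k + 1) - 1) * (q ^ k * ∏ i ∈ range k, (q ^ k - q ^ i)) := by
        rw [prod_range_succ', pow_zero, mul_comm]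
        congr 1
        have hk : q ^ k = ∏ _i ∈ range k, q := by simp
        rw [hk, ← prod_mul_distrib, ← hk]
        exact prod_congr rfl fun i _ => by ring
      have a2 : ∏ i ∈ range (k + 1), (q ^ (n + 1) - q ^ i)
          = (q ^ (n + 1) - 1) * (q ^ k * ∏ i ∈ range k, (q ^ n - q ^ i)) := by
        rw [prod_range_succ', pow_zero, mul_comm]
        congr 1
        have hk : q ^ k = ∏ _i ∈ range k, q := by simp
        rw [hk, ← prod_mul_distrib]
        exact prod_congr rfl fun i _ => by ring
      have h1 := ih k
      have h2 := ih (k + 1)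
      rw [prod_range_succ (fun i => q ^ n - q ^ i), ← h1] at h2
      rw [a2, ← h1, gauss_succ_succ, add_mul, mul_assoc (q ^ (k + 1)), h2, a1]
      ring

lemma gauss_alternating_aux (n : ℕ) (t : A) :
    ∑ k ∈ range (n + 2), (-t) ^ k * q ^ (k.choose 2) * gauss q (n + 1) k =
      (1 - t) * ∑ k ∈ range (n + 1), (-(q * t)) ^ k * q ^ (k.choose 2) * gauss q n k := by
  rw [sum_range_succ']
  have h : ∀ k, (-t) ^ (k + 1) * q ^ ((k + 1).choose 2) * gauss q (n + 1) (k + 1) =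
      (-t) * ((-(q * t)) ^ k * q ^ (k.choose 2) * gauss q n k) +
      (-(q * t)) ^ (k + 1) * q ^ ((k + 1).choose 2) * gauss q n (k + 1) := by
    intro k
    have : (k + 1).choose 2 = k + k.choose 2 := by
      rw [Nat.choose_succ_succ' k 1]; simp
    rw [gauss_succ_succ, this]
    have e1 : (-(q * t)) ^ k = (-t) ^ k * q ^ k := by rw [← mul_pow]; congr 1; ring
    have e2 : (-(q * t)) ^ (k + 1) = (-t) ^ (k + 1) * q ^ (k + 1) := by
      rw [← mul_pow]; congr 1; ring
    rw [e1, e2]; ring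
  rw [sum_congr rfl fun k _ => h k, sum_add_distrib, ← mul_sum]
  have h2 := sum_range_succ' (fun k => (-(q * t)) ^ k * q ^ (k.choose 2) * gauss q n k) (n + 1)
  have h3 := sum_range_succ (fun k => (-(q * t)) ^ k * q ^ (k.choose 2) * gauss q n k) (n + 1)
  rw [gauss_eq_zero q (by omega : n < n + 1), mul_zero, add_zero] at h3
  rw [h3] at h2
  simp only [pow_zero, gauss_zero_right, Nat.choose_zero_succ, mul_one] at h2 ⊢
  rw [add_assoc, ← h2]; ring

lemma gauss_alternating (n : ℕ) :
    ∑ k ∈ range (n + 1), (-1) ^ k * q ^ (k.choose 2) * gauss q n k = if n = 0 then 1 else 0 := by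
  cases n with
  | zero => simp
  | succ n =>
    have := gauss_alternating_aux q n 1
    simpa using this

end gauss

section field

variable {F : Type*} [Field F] (q : F)

lemma qfac_ne_zero (hq : ∀ i : ℕ, 0 < i → q ^ i ≠ 1) (n : ℕ) : qfac q n ≠ 0 :=
  prod_ne_zero_iff.2 fun i _ => sub_ne_zero.2 (hq _ (by omega))

lemma gauss_trinomial (hq : ∀ i : ℕ, 0 < i → q ^ i ≠ 1) (i j l : ℕ) :
    gauss q (i + j + l) (i + j) * gauss q (i + j) i =
      gauss q (i + j + l) i * gauss q (j + l) j := by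
  have h1 := gauss_mul_qfac q l (i + j)
  have h2 := gauss_mul_qfac q j i
  have h3 := gauss_mul_qfac q (j + l) i
  have h4 := gauss_mul_qfac q l j
  have n := qfac_ne_zero q hq
  rw [show l + (i + j) = i + j + l by omega] at h1
  rw [show j + i = i + j by omega] at h2
  rw [show j + l + i = i + j + l by omega] at h3
  rw [show l + j = j + l by omega] at h4
  apply mul_right_cancel₀ (mul_ne_zero (mul_ne_zero (n i) (n j)) (n l))
  calc _ = gauss q (i + j + l) (i + j) * (gauss q (i + j) i * qfac q i * qfac q j) * qfac q l := by
        ring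
    _ = gauss q (i + j + l) i * qfac q i * (gauss q (j + l) j * qfac q j * qfac q l) := by
        rw [h2, h1, h4, h3]
    _ = _ := by ring

lemma gauss_inv (h0 : q ≠ 0) (hq : ∀ i : ℕ, 0 < i → q ^ i ≠ 1) (n k : ℕ) :
    gauss q⁻¹ (n + k) k * q ^ (k * n) = gauss q (n + k) k := by
  have hq' : ∀ i : ℕ, 0 < i → q⁻¹ ^ i ≠ 1 := fun i hi h => hq i hi (by
    rw [inv_pow, inv_eq_one] at h; exact h)
  have key : ∀ n, qfac q⁻¹ n * ((-1) ^ n * q ^ ((n + 1).choose 2)) = qfac q n := by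
    intro n
    induction n with
    | zero => simp [qfac]
    | succ n ih =>
      rw [qfac_succ, qfac_succ, ← ih]
      have : (n + 1 + 1).choose 2 = (n + 1) + (n + 1).choose 2 := by
        rw [Nat.choose_succ_succ' (n + 1) 1]; simp
      rw [this, inv_pow, pow_add q (n + 1)]
      have : q ^ (n + 1) ≠ 0 := pow_ne_zero _ h0
      field_simp
      ring
  have h1 := gauss_mul_qfac q n k
  have h2 := gauss_mul_qfac q⁻¹ n k
  have e : (n + k + 1).choose 2 = (n + 1).choose 2 + (k + 1).choose 2 + k * n := by
    rw [← Nat.cast_inj (R := ℚ)]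
    push_cast [Nat.cast_choose_two]
    ring
  apply mul_right_cancel₀ (mul_ne_zero (qfac_ne_zero q hq k) (qfac_ne_zero q hq n))
  rw [← mul_assoc (gauss q (n + k) k), h1, ← key n, ← key k, ← key (n + k), ← h2, e]
  ring

/-- The transition weights. -/
def Kc {A : Type*} [CommRing A] (x : A) (a m m' : ℕ) : A := x ^ (m' * (a - m)) * gauss x (a - m') (a - m)

lemma map_Kc {A B : Type*} [CommRing A] [CommRing B] (φ : A →+* B) (x : A) (a m m' : ℕ) :
    φ (Kc x a m m') = Kc (φ x) a m m' := by simp [Kc, map_gauss]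

/-- the diagonal weights `E(m)` -/
def Ed {A : Type*} [CommRing A] (x : A) (m : ℕ) : A := (-1) ^ m * x ^ (m.choose 2)

lemma Ed_ne_zero (h0 : q ≠ 0) (m : ℕ) : Ed q m ≠ 0 :=
  mul_ne_zero (pow_ne_zero _ (by simp)) (pow_ne_zero _ h0)

/-- `K E⁻¹ K̄ E = 1`. -/
lemma Kc_inv (h0 : q ≠ 0) (hq : ∀ i : ℕ, 0 < i → q ^ i ≠ 1) (a m n : ℕ) (hm : m ≤ a)
    (hn : n ≤ m) :
    ∑ k ∈ range (m - n + 1), Kc q a m (m - k) * (Ed q (m - k))⁻¹ * Kc q⁻¹ a (m - k) n * Ed q n =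
      if m = n then 1 else 0 := by
  obtain ⟨i, rfl⟩ := Nat.exists_eq_add_of_le hm
  obtain ⟨t, rfl⟩ := Nat.exists_eq_add_of_le hn
  have key : ∀ k ∈ range (t + 1), Kc q (n + t + i) (n + t) (n + t - k) * (Ed q (n + t - k))⁻¹ *
      Kc q⁻¹ (n + t + i) (n + t - k) n * Ed q n =
      ((-1) ^ t * gauss q (i + t) i * Ed q n * (q ^ ((n + t).choose 2))⁻¹ * (-1) ^ n) *
        ((-1) ^ k * q ^ (k.choose 2) * gauss q t k) := by
    intro k hk
    obtain ⟨l, rfl⟩ := Nat.exists_eq_add_of_le (Nat.lt_succ_iff.1 (mem_range.1 hk))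
    have e1 : n + (k + l) - k = n + l := by omega
    rw [e1]
    simp only [Kc, Ed]
    have e2 : n + (k + l) + i - (n + l) = i + k := by omega
    have e3 : n + (k + l) + i - (n + (k + l)) = i := by omega
    have e4 : n + (k + l) + i - n = i + k + l := by omega
    rw [e2, e3, e4]
    have h1 := gauss_inv q h0 hq l (i + k)
    rw [show l + (i + k) = i + k + l by omega] at h1
    have h2 := gauss_trinomial q hq i k l
    have e : (n + (k + l)).choose 2 = (n + l).choose 2 + k * (n + l) + k.choose 2 := by
      rw [← Nat.cast_inj (R := ℚ)]
      push_cast [Nat.cast_choose_two]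
      ring
    rw [← add_assoc i k l, e]
    have h3 : gauss q⁻¹ (i + k + l) (i + k) * gauss q (i + k) i * q ^ ((i + k) * l) =
        gauss q (i + k + l) i * gauss q (k + l) k := by rw [← h2, ← h1]; ring
    have s1 : ((-1 : F) ^ (n + l))⁻¹ = (-1) ^ (n + l) := by
      rw [← inv_pow]; norm_num
    have s2 : ((-1 : F) ^ k) * (-1) ^ k = 1 := by rw [← mul_pow]; simp
    have hp : ∀ j : ℕ, q ^ j ≠ 0 := fun j => pow_ne_zero j h0
    rw [mul_inv, s1]
    have h4 : gauss q⁻¹ (i + k + l) (i + k) * gauss q (i + k) i =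
        gauss q (i + k + l) i * gauss q (k + l) k * (q ^ ((i + k) * l))⁻¹ := by
      rw [← h3, mul_assoc, mul_inv_cancel₀ (hp _), mul_one]
    calc _ = (gauss q⁻¹ (i + k + l) (i + k) * gauss q (i + k) i) *
          (q ^ ((n + l) * i) * (q⁻¹) ^ (n * (i + k)) * (q ^ ((n + l).choose 2))⁻¹) *
          ((-1) ^ (n + l) * ((-1) ^ n * q ^ (n.choose 2))) := by ring
      _ = _ := by
        rw [h4, inv_pow]
        have h5 : (q ^ ((i + k) * l))⁻¹ * (q ^ ((n + l) * i) * (q ^ (n * (i + k)))⁻¹ *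
            (q ^ ((n + l).choose 2))⁻¹) =
            (q ^ ((n + l).choose 2 + k * (n + l) + k.choose 2))⁻¹ * q ^ (k.choose 2) := by
          rw [eq_comm, inv_mul_eq_iff_eq_mul₀ (hp _)]
          field_simp
          ring
        calc _ = gauss q (i + k + l) i * gauss q (k + l) k * ((q ^ ((i + k) * l))⁻¹ *
              (q ^ ((n + l) * i) * (q ^ (n * (i + k)))⁻¹ * (q ^ ((n + l).choose 2))⁻¹)) *
              ((-1) ^ (n + l) * ((-1) ^ n * q ^ (n.choose 2))) * ((-1 : F) ^ k * (-1) ^ k) := by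
              rw [s2]; ring
          _ = _ := by rw [h5]; ring
  rw [show n + t - n = t by omega, sum_congr rfl key, ← mul_sum, gauss_alternating]
  by_cases ht : t = 0
  · subst ht
    have hp : ∀ j : ℕ, q ^ j ≠ 0 := fun j => pow_ne_zero j h0
    simp only [add_zero, if_true, gauss_self, Ed, pow_zero, one_mul, mul_one]
    have s2 : ((-1 : F) ^ n) * (-1) ^ n = 1 := by rw [← mul_pow]; simp
    calc _ = ((-1 : F) ^ n * (-1) ^ n) * (q ^ n.choose 2 * (q ^ n.choose 2)⁻¹) := by ring
      _ = 1 := by rw [s2, mul_inv_cancel₀ (hp _), one_mul]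
  · rw [if_neg ht, if_neg (by omega), mul_zero]

end field

end HeisZeta


namespace HeisZeta

open Finset

lemma Kc_eq_zero {A : Type*} [CommRing A] (x : A) {a m m' : ℕ} (h : m < m') (h' : m' ≤ a) :
    Kc x a m m' = 0 := by
  rw [Kc, gauss_eq_zero x (by omega), mul_zero]

lemma Kc_self {A : Type*} [CommRing A] (x : A) (a m : ℕ) : Kc x a m m = x ^ (m * (a - m)) := by
  simp [Kc]

lemma Kc_inv' {F : Type*} [Field F] (q : F) (h0 : q ≠ 0) (hq : ∀ i : ℕ, 0 < i → q ^ i ≠ 1)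
    (a m n : ℕ) (hm : m ≤ a) (hn : n ≤ m) :
    ∑ k ∈ range (m + 1), Kc q a m k * (Ed q k)⁻¹ * Kc q⁻¹ a k n * Ed q n =
      if m = n then 1 else 0 := by
  rw [← Kc_inv q h0 hq a m n hm hn, ← sum_range_reflect]
  symm
  simp only [Nat.add_sub_cancel]
  refine sum_subset (range_mono (by omega)) fun k hk hk' => ?_
  simp only [mem_range] at hk hk'
  rw [Kc_eq_zero q⁻¹ (by omega) (by omega)]
  simp

/-- `f(S) = ∑_{i ∈ S} f_i`. -/
def fS {r : ℕ} (f : Fin r → ℕ) (S : Finset (Fin r)) : ℕ := ∑ i ∈ S, f i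

/-- The linear system satisfied by the generating functions `G_S(m)`. -/
structure Sys {r : ℕ} (f : Fin r → ℕ) (d : ℕ) {A : Type*} [CommRing A] (x y : A)
    (G : Finset (Fin r) → ℕ → A) : Prop where
  empty : ∀ m, G ∅ m = if m = 0 then 1 else 0
  zero : ∀ S m, fS f S < m → G S m = 0
  step : ∀ S : Finset (Fin r), S.Nonempty → ∀ m ≤ fS f S,
    G S m = y ^ (2 * fS f S) * (x ^ (2 * d) * y) ^ m *
      ∑ m' ∈ range (m + 1), Kc x (fS f S) m m' * ∑ S' ∈ S.powerset, G S' m'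

variable {r : ℕ} {f : Fin r → ℕ} {d : ℕ}

lemma Sys.map {A B : Type*} [CommRing A] [CommRing B] (φ : A →+* B) {x y : A}
    {G : Finset (Fin r) → ℕ → A} (h : Sys f d x y G) :
    Sys f d (φ x) (φ y) (fun S m => φ (G S m)) where
  empty m := by simp only [h.empty]; split_ifs <;> simp
  zero S m hm := by simp only [h.zero S m hm, map_zero]
  step S hS m hm := by
    simp only [h.step S hS m hm, map_mul, map_pow, map_sum, map_Kc]

lemma fS_pos (hf : ∀ i, 0 < f i) {S : Finset (Fin r)} (hS : S.Nonempty) : 0 < fS f S :=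
  sum_pos (fun i _ => hf i) hS

lemma Sys.unique (hf : ∀ i, 0 < f i) {A : Type*} [CommRing A] [IsDomain A] {x y : A}
    (hxy : ∀ a b : ℕ, 0 < b → x ^ a * y ^ b ≠ 1)
    {G H : Finset (Fin r) → ℕ → A} (hG : Sys f d x y G) (hH : Sys f d x y H) (S m) :
    G S m = H S m := by
  induction S using Finset.strongInduction generalizing m with
  | H S ihS =>
  induction m using Nat.strong_induction_on with
  | h m ihm =>
  rcases S.eq_empty_or_nonempty with rfl | hS
  · rw [hG.empty, hH.empty]
  by_cases hm : fS f S < m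
  · rw [hG.zero _ _ hm, hH.zero _ _ hm]
  push Not at hm
  have h1 := hG.step S hS m hm
  have h2 := hH.step S hS m hm
  have h3 : ∑ m' ∈ range (m + 1), Kc x (fS f S) m m' * ∑ S' ∈ S.powerset, G S' m' -
      ∑ m' ∈ range (m + 1), Kc x (fS f S) m m' * ∑ S' ∈ S.powerset, H S' m' =
      Kc x (fS f S) m m * (G S m - H S m) := by
    rw [← sum_sub_distrib, sum_eq_single m]
    · rw [← mul_sub, ← sum_sub_distrib, sum_eq_single S]
      · intro S' hS' hne
        rw [ihS S' (Finset.ssubset_iff_subset_ne.2 ⟨mem_powerset.1 hS', hne⟩), sub_self]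
      · intro h; exact absurd (mem_powerset_self S) h
    · intro m' hm' hne
      rw [← mul_sub, ← sum_sub_distrib, sum_eq_zero, mul_zero]
      intro S' hS'
      rcases eq_or_ne S' S with rfl | hne'
      · rw [ihm m' (by simp at hm'; omega), sub_self]
      · rw [ihS S' (Finset.ssubset_iff_subset_ne.2 ⟨mem_powerset.1 hS', hne'⟩), sub_self]
    · intro h; simp at h
  have h4 : (G S m - H S m) * (1 - x ^ (2 * d * m + m * (fS f S - m)) * y ^ (2 * fS f S + m)) = 0 := by
    have : G S m - H S m = y ^ (2 * fS f S) * (x ^ (2 * d) * y) ^ m *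
        (Kc x (fS f S) m m * (G S m - H S m)) := by
      rw [← h3, mul_sub, ← h1, ← h2]
    rw [Kc_self] at this
    calc _ = (G S m - H S m) - y ^ (2 * fS f S) * (x ^ (2 * d) * y) ^ m *
        (x ^ (m * (fS f S - m)) * (G S m - H S m)) := by
          rw [mul_pow, ← pow_mul]; ring
      _ = 0 := by rw [← this, sub_self]
  rcases mul_eq_zero.1 h4 with h | h
  · exact sub_eq_zero.1 h
  · exact absurd (sub_eq_zero.1 h).symm (hxy _ _ (by have := fS_pos hf hS; omega))

lemma exists_wf_rec {α β : Type*} [Zero β] {rel : α → α → Prop} (hwf : WellFounded rel)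
    (step : α → (α → β) → β) :
    ∃ G : α → β, ∀ a, ∃ H : α → β, (∀ b, rel b a → H b = G b) ∧ (∀ b, ¬ rel b a → H b = 0) ∧
      G a = step a H := by
  classical
  refine ⟨hwf.fix fun a rec => step a fun b => if h : rel b a then rec b h else 0, fun a => ?_⟩
  refine ⟨_, ?_, ?_, by rw [WellFounded.fix_eq]⟩
  · intro b hb; simp [hb]
  · intro b hb; simp [hb]

lemma Sys.exists (hf : ∀ i, 0 < f i) {A : Type*} [CommRing A] {x y : A}
    (hxy : ∀ a b : ℕ, 0 < b → IsUnit (1 - x ^ a * y ^ b)) :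
    ∃ G : Finset (Fin r) → ℕ → A, Sys f d x y G := by
  classical
  obtain ⟨G, hG⟩ := exists_wf_rec (α := Finset (Fin r) × ℕ) (β := A)
    (rel := Prod.Lex (· ⊂ ·) (· < ·))
    (WellFounded.prod_lex wellFounded_lt wellFounded_lt) fun a H =>
      if a.1 = ∅ then (if a.2 = 0 then 1 else 0) else if fS f a.1 < a.2 then 0 else
      Ring.inverse (1 - x ^ (2 * d * a.2 + a.2 * (fS f a.1 - a.2)) * y ^ (2 * fS f a.1 + a.2)) *
       (y ^ (2 * fS f a.1) * (x ^ (2 * d) * y) ^ a.2 *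
      ∑ m' ∈ range (a.2 + 1), Kc x (fS f a.1) a.2 m' * ∑ S' ∈ a.1.powerset, H (S', m'))
  refine ⟨fun S m => G (S, m), ?_, ?_, ?_⟩
  · intro m
    obtain ⟨H, -, -, h⟩ := hG (∅, m)
    simpa using h
  · intro S m hm
    obtain ⟨H, -, -, h⟩ := hG (S, m)
    rcases S.eq_empty_or_nonempty with rfl | hS
    · simp only [if_true] at h
      rw [h, if_neg]
      simp [fS] at hm; omega
    · simpa [hm, hS.ne_empty] using h
  · intro S hS m hm
    obtain ⟨H, hH1, hH2, h1⟩ := hG (S, m)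
    simp only at h1 ⊢
    rw [if_neg hS.ne_empty, if_neg (by omega)] at h1
    set u := 1 - x ^ (2 * d * m + m * (fS f S - m)) * y ^ (2 * fS f S + m) with hu
    have hun : IsUnit u := hxy _ _ (by have := fS_pos hf hS; omega)
    have h2 : u * G (S, m) = y ^ (2 * fS f S) * (x ^ (2 * d) * y) ^ m *
      ∑ m' ∈ range (m + 1), Kc x (fS f S) m m' * ∑ S' ∈ S.powerset, H (S', m') := by
      rw [h1, ← mul_assoc, Ring.mul_inverse_cancel _ hun, one_mul]
    have h3 : ∑ m' ∈ range (m + 1), Kc x (fS f S) m m' * ∑ S' ∈ S.powerset, G (S', m') =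
      ∑ m' ∈ range (m + 1), (Kc x (fS f S) m m' * ∑ S' ∈ S.powerset, H (S', m')) +
        Kc x (fS f S) m m * G (S, m) := by
      rw [sum_range_succ, sum_range_succ, add_assoc]
      congr 1
      · refine sum_congr rfl fun m' hm' => ?_
        congr 1
        refine sum_congr rfl fun S' hS' => ?_
        rw [hH1]
        rw [Prod.lex_def]
        rcases eq_or_ne S' S with rfl | hne
        · right; exact ⟨rfl, mem_range.1 hm'⟩
        · left; exact Finset.ssubset_iff_subset_ne.2 ⟨mem_powerset.1 hS', hne⟩
      · rw [← mul_add]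
        congr 1
        have hmem := mem_powerset_self S
        rw [← add_sum_erase _ _ hmem, ← add_sum_erase _ _ hmem, hH2, zero_add, add_comm]
        · congr 1
          refine sum_congr rfl fun S' hS' => ?_
          rw [mem_erase] at hS'
          rw [hH1]
          rw [Prod.lex_def]
          left; exact Finset.ssubset_iff_subset_ne.2 ⟨mem_powerset.1 hS'.2, hS'.1⟩
        · rw [Prod.lex_def]; simp
    rw [h3, mul_add, ← h2, Kc_self, hu, mul_pow, ← pow_mul]
    ring

lemma moebius_powerset {A : Type*} [CommRing A] (U : Finset (Fin r) → A) (S : Finset (Fin r)) :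
    ∑ S' ∈ S.powerset, (-1) ^ S'.card * ∑ S'' ∈ S'.powerset, U S'' = (-1) ^ S.card * U S := by
  induction S using Finset.induction_on generalizing U with
  | empty => simp
  | insert a T ha ih =>
    rw [sum_powerset_insert ha, ← sum_add_distrib, card_insert_of_notMem ha]
    have := ih fun S => U (insert a S)
    rw [pow_succ, mul_neg_one, neg_mul, ← this, ← sum_neg_distrib]
    refine sum_congr rfl fun S' hS' => ?_
    have ha' : a ∉ S' := fun h => ha (mem_powerset.1 hS' h)
    rw [card_insert_of_notMem ha', sum_powerset_insert ha']
    ring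

section fe

variable {F : Type*} [Field F] {x y : F}
  {G H : Finset (Fin r) → ℕ → F}

lemma Sys.dual (hf : ∀ i, 0 < f i) (hx : x ≠ 0) (hy : y ≠ 0)
    (hx1 : ∀ i : ℕ, 0 < i → x ^ i ≠ 1) (hxy : ∀ a b : ℕ, 0 < b → x ^ a * y ^ b ≠ 1)
    (hG : Sys f d x y G) (hH : Sys f d x⁻¹ y⁻¹ H) (S m) :
    H S m * (x ^ (2 * d) * y) ^ m = (-1) ^ S.card * Ed x m * ∑ S' ∈ S.powerset, G S' m := by
  set T := x ^ (2 * d) * y with hT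
  have hT0 : T ≠ 0 := mul_ne_zero (pow_ne_zero _ hx) hy
  have hTm : ∀ m : ℕ, T ^ m ≠ 0 := fun m => pow_ne_zero _ hT0
  have hE := Ed_ne_zero x hx
  set U : Finset (Fin r) → ℕ → F := fun S m => T ^ m * (Ed x m)⁻¹ * H S m with hU
  set G' : Finset (Fin r) → ℕ → F := fun S m => (-1) ^ S.card * ∑ S' ∈ S.powerset, U S' m with hG'
  have hmob : ∀ S m, ∑ S' ∈ S.powerset, G' S' m = (-1) ^ S.card * U S m := fun S m =>
    moebius_powerset (fun S => U S m) S
  have sys : Sys f d x y G' := by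
    refine ⟨?_, ?_, ?_⟩
    · intro m
      simp only [hG', hU, powerset_empty, sum_singleton, hH.empty]
      split_ifs with h
      · subst h; simp [Ed]
      · simp
    · intro S m hm
      simp only [hG']
      rw [sum_eq_zero, mul_zero]
      intro S' hS'
      simp only [hU]
      rw [hH.zero, mul_zero]
      exact lt_of_le_of_lt (sum_le_sum_of_subset (mem_powerset.1 hS')) hm
    · intro S hS m hm
      simp only [hmob]
      set a := fS f S
      set w : ℕ → F := fun n => (y ^ (2 * a))⁻¹ * (T ^ n)⁻¹ * ∑ S' ∈ S.powerset, U S' n with hw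
      have hUw : ∀ n ≤ a, U S n = ∑ k ∈ range (m + 1), (Ed x n)⁻¹ * Kc x⁻¹ a n k * Ed x k * w k ∨ m < n := by
        intro n hn
        by_cases hmn : m < n
        · right; exact hmn
        left
        push Not at hmn
        have hs := hH.step S hS n hn
        have e0 : ∑ k ∈ range (m + 1), (Ed x n)⁻¹ * Kc x⁻¹ a n k * Ed x k * w k =
            ∑ k ∈ range (n + 1), (Ed x n)⁻¹ * Kc x⁻¹ a n k * Ed x k * w k := by
          symm
          refine sum_subset (range_mono (by omega)) fun k hk hk' => ?_
          simp only [mem_range] at hk hk'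
          rw [Kc_eq_zero _ (by omega) (by omega)]
          simp
        rw [e0]
        simp only [hU]
        rw [hs]
        have e1 : (x⁻¹ ^ (2 * d) * y⁻¹) = T⁻¹ := by rw [hT, mul_inv, inv_pow]
        rw [e1, inv_pow, inv_pow, mul_sum, mul_sum]
        refine sum_congr rfl fun k hk => ?_
        simp only [hw, hU]
        have := hTm n
        have := hTm k
        have := hE n
        have := hE k
        have hya : y ^ (2 * a) ≠ 0 := pow_ne_zero _ hy
        change T ^ n * (Ed x n)⁻¹ * ((y ^ (2 * a))⁻¹ * (T ^ n)⁻¹ * (Kc x⁻¹ a n k * _)) = _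
        rw [← mul_sum]
        generalize Kc x⁻¹ a n k = c
        field_simp
      have hUw' : ∀ n ∈ range (m + 1), U S n =
          ∑ k ∈ range (m + 1), (Ed x n)⁻¹ * Kc x⁻¹ a n k * Ed x k * w k := by
        intro n hn
        rw [mem_range] at hn
        rcases hUw n (by omega) with h | h
        · exact h
        · omega
      have key : ∑ m' ∈ range (m + 1), Kc x a m m' * U S m' = w m := by
        rw [sum_congr rfl fun n hn => by rw [hUw' n hn, mul_sum], sum_comm]
        have : ∀ k ∈ range (m + 1), ∑ n ∈ range (m + 1),
            Kc x a m n * ((Ed x n)⁻¹ * Kc x⁻¹ a n k * Ed x k * w k) = if m = k then w k else 0 := by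
          intro k hk
          rw [mem_range] at hk
          have := Kc_inv' x hx hx1 a m k hm (by omega)
          rw [← mul_one (w k), ← mul_zero (w k), ← mul_ite, ← this, mul_sum]
          refine sum_congr rfl fun n _ => by ring
        rw [sum_congr rfl this]
        simp
      have e2 : ∑ m' ∈ range (m + 1), Kc x a m m' * ((-1) ^ S.card * U S m') =
          (-1) ^ S.card * w m := by
        rw [← key, mul_sum]
        exact sum_congr rfl fun _ _ => by ring
      rw [e2]
      simp only [hG', hw]
      have := hTm m
      have hya : y ^ (2 * a) ≠ 0 := pow_ne_zero _ hy
      rw [← hT]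
      field_simp
  have huniq := hG.unique hf hxy sys
  have : ∑ S' ∈ S.powerset, G S' m = (-1) ^ S.card * U S m := by
    rw [← hmob]; exact sum_congr rfl fun S' _ => huniq S' m
  rw [this]
  have s2 : ((-1 : F) ^ S.card) * (-1) ^ S.card = 1 := by rw [← mul_pow]; simp
  simp only [hU]
  have := hE m
  calc _ = 1 * (Ed x m * (Ed x m)⁻¹) * (H S m * T ^ m) := by rw [mul_inv_cancel₀ this]; ring
    _ = ((-1 : F) ^ S.card) * (-1) ^ S.card * (Ed x m * (Ed x m)⁻¹) * (H S m * T ^ m) := by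
      rw [s2]
    _ = _ := by ring

/-- total generating function -/
def Ftot {A : Type*} [CommRing A] (d : ℕ) (G : Finset (Fin r) → ℕ → A) : A :=
  ∑ m ∈ range (d + 1), ∑ S : Finset (Fin r), G S m

lemma Sys.top {A : Type*} [CommRing A] {x y : A} {G : Finset (Fin r) → ℕ → A} (hr : 0 < r)
    (hd : d = ∑ i, f i) (hG : Sys f d x y G) :
    G univ d = y ^ (2 * d) * (x ^ (2 * d) * y) ^ d * Ftot d G := by
  have hne : (univ : Finset (Fin r)).Nonempty := ⟨⟨0, hr⟩, mem_univ _⟩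
  have hfS : fS f univ = d := hd.symm
  rw [hG.step univ hne d (by omega), hfS, Ftot]
  congr 1
  refine sum_congr rfl fun m' _ => ?_
  simp [Kc]

lemma Sys.sum_top {A : Type*} [CommRing A] {x y : A} {G : Finset (Fin r) → ℕ → A}
    (hf : ∀ i, 0 < f i) (hd : d = ∑ i, f i) (hG : Sys f d x y G) :
    ∑ S ∈ (univ : Finset (Fin r)).powerset, G S d = G univ d := by
  refine sum_eq_single _ (fun S _ hS => hG.zero _ _ ?_) (by simp)
  rw [hd]
  obtain ⟨i, hi⟩ : ∃ i, i ∉ S := by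
    by_contra! h
    exact hS (eq_univ_iff_forall.2 h)
  exact sum_lt_sum_of_subset (subset_univ S) (mem_univ i) hi (hf i) (by simp)

lemma Sys.func_eq (hf : ∀ i, 0 < f i) (hx : x ≠ 0) (hy : y ≠ 0)
    (hx1 : ∀ i : ℕ, 0 < i → x ^ i ≠ 1) (hxy : ∀ a b : ℕ, 0 < b → x ^ a * y ^ b ≠ 1)
    (hr : 0 < r) (hd : d = ∑ i, f i) (hG : Sys f d x y G)
    (hH : Sys f d x⁻¹ y⁻¹ H) :
    Ftot d H = (-1) ^ (r + d) * x ^ (2 * d ^ 2 + d.choose 2) * y ^ (5 * d) * Ftot d G := by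
  have h1 := hG.top hr hd
  have h2 := hH.top hr hd
  have h3 := Sys.dual hf hx hy hx1 hxy hG hH univ d
  rw [hG.sum_top hf hd, h1, h2] at h3
  have e1 : (x⁻¹ ^ (2 * d) * y⁻¹) = (x ^ (2 * d) * y)⁻¹ := by rw [mul_inv, inv_pow]
  have hT : (x ^ (2 * d) * y) ^ d ≠ 0 := pow_ne_zero _ (mul_ne_zero (pow_ne_zero _ hx) hy)
  have hyd : y ^ (2 * d) ≠ 0 := pow_ne_zero _ hy
  rw [e1, inv_pow, inv_pow] at h3
  have h4 : Ftot d H = y ^ (2 * d) * ((y ^ (2 * d))⁻¹ * ((x ^ (2 * d) * y) ^ d)⁻¹ * Ftot d H *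
      (x ^ (2 * d) * y) ^ d) := by
    generalize (x ^ (2 * d) * y) ^ d = T at *
    field_simp
  rw [h4, h3, Ed, card_univ, Fintype.card_fin]
  ring

end fe

end HeisZeta


namespace HeisZeta

open Finset
open scoped PowerSeries.WithPiTopology

/-- Coefficientwise finite families. -/
def LF {α : Type*} (w : α → PowerSeries ℚ) : Prop :=
  ∀ n, {a | PowerSeries.coeff n (w a) ≠ 0}.Finite

lemma LF.summable {α : Type*} {w : α → PowerSeries ℚ} (h : LF w) : Summable w := by
  rw [PowerSeries.WithPiTopology.summable_iff_summable_coeff]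
  intro n
  exact summable_of_hasFiniteSupport (h n)

lemma LF.comp_injective {α β : Type*} {w : α → PowerSeries ℚ} (h : LF w) {g : β → α}
    (hg : Function.Injective g) : LF (w ∘ g) := fun n =>
  (h n).preimage hg.injOn

instance : RegularSpace (PowerSeries ℚ) := inferInstance

lemma LF.fiberwise {α β : Type*} {w : α → PowerSeries ℚ} (h : LF w) (g : α → β)
    {v : β → PowerSeries ℚ} (hv : ∀ b, HasSum (fun a : {a // g a = b} => w a) (v b)) :
    HasSum v (∑' a, w a) := by
  have h1 : HasSum (w ∘ Equiv.sigmaFiberEquiv g) (∑' a, w a) :=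
    (Equiv.hasSum_iff (Equiv.sigmaFiberEquiv g)).2 h.summable.hasSum
  exact h1.sigma hv

lemma hasSum_card {α β : Type*} (Q : ℕ → α → Prop) (hfin : ∀ n, {a | Q n a}.Finite) (g : α → β) :
    HasSum (fun b => PowerSeries.mk fun n => (Nat.card {a // Q n a ∧ g a = b} : ℚ))
      (PowerSeries.mk fun n => (Nat.card {a // Q n a} : ℚ)) := by
  rw [PowerSeries.WithPiTopology.hasSum_iff_hasSum_coeff]
  intro n
  simp only [PowerSeries.coeff_mk]
  classical
  have h0 : ∀ b ∉ (hfin n).toFinset.image g,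
      (Nat.card {a // Q n a ∧ g a = b} : ℚ) = 0 := by
    intro b hb
    have : IsEmpty {a // Q n a ∧ g a = b} := by
      constructor
      rintro ⟨a, h1, h2⟩
      exact hb (mem_image.2 ⟨a, by simpa using h1, h2⟩)
    simp
  have e1 : Nat.card {a // Q n a} = (hfin n).toFinset.card :=
    Nat.subtype_card _ (by simp)
  have e2 : ∀ b, Nat.card {a // Q n a ∧ g a = b} =
      ((hfin n).toFinset.filter (fun a => g a = b)).card := fun b =>
    Nat.subtype_card _ (by simp)
  have key : (Nat.card {a // Q n a} : ℚ) =
      ∑ b ∈ (hfin n).toFinset.image g, (Nat.card {a // Q n a ∧ g a = b} : ℚ) := by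
    rw [← Nat.cast_sum]
    congr 1
    rw [e1, card_eq_sum_card_image g]
    exact sum_congr rfl fun b _ => (e2 b).symm
  rw [key]
  exact hasSum_sum_of_ne_finset_zero h0

end HeisZeta


namespace HeisZeta

open Finset

section groups
variable {A C : Type*} [AddCommGroup A] [AddCommGroup C]

def fib (N : AddSubgroup (C × A)) : AddSubgroup A := N.comap (AddMonoidHom.inr C A)
def bas (N : AddSubgroup (C × A)) : AddSubgroup C := N.map (AddMonoidHom.fst C A)

lemma mem_fib {N : AddSubgroup (C × A)} {a : A} : a ∈ fib N ↔ (0, a) ∈ N := Iff.rfl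
lemma mem_bas {N : AddSubgroup (C × A)} {c : C} : c ∈ bas N ↔ ∃ a, (c, a) ∈ N := by
  simp [bas]

lemma index_eq (N : AddSubgroup (C × A)) : N.index = (bas N).index * (fib N).index := by
  have h1 : (bas N).index = (N ⊔ (AddMonoidHom.fst C A).ker).index := by
    rw [bas, AddSubgroup.index_map, AddMonoidHom.range_eq_top_of_surjective, AddSubgroup.index_top,
      mul_one]
    exact fun c => ⟨(c, 0), rfl⟩
  have h2 : (fib N).index = N.relIndex (AddMonoidHom.fst C A).ker := by
    rw [fib, AddSubgroup.index_comap]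
    congr 1
    ext ⟨c, a⟩
    simp [eq_comm, AddSubgroup.mem_prod]
  rw [h1, h2, ← AddSubgroup.relIndex_sup_left, mul_comm, AddSubgroup.relIndex_mul_index le_sup_left]

/-- the graph subgroup of a hom -/
def graphSub (B : AddSubgroup C) (M : AddSubgroup A) (φ : B →+ A ⧸ M) : AddSubgroup (C × A) where
  carrier := {x | ∃ h : x.1 ∈ B, φ ⟨x.1, h⟩ = (x.2 : A ⧸ M)}
  zero_mem' := ⟨B.zero_mem, by exact φ.map_zero⟩
  add_mem' := by
    rintro x y ⟨hx, hx'⟩ ⟨hy, hy'⟩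
    refine ⟨B.add_mem hx hy, ?_⟩
    rw [Prod.snd_add, QuotientAddGroup.mk_add, ← hx', ← hy', ← map_add]
    rfl
  neg_mem' := by
    rintro x ⟨hx, hx'⟩
    refine ⟨B.neg_mem hx, ?_⟩
    rw [Prod.snd_neg, QuotientAddGroup.mk_neg, ← hx', ← map_neg]
    rfl

lemma mem_graphSub {B : AddSubgroup C} {M : AddSubgroup A} {φ : B →+ A ⧸ M} {c : C} {a : A} :
    (c, a) ∈ graphSub B M φ ↔ ∃ h : c ∈ B, φ ⟨c, h⟩ = (a : A ⧸ M) := Iff.rfl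

lemma graphSub_bas (B : AddSubgroup C) (M : AddSubgroup A) (φ : B →+ A ⧸ M) :
    bas (graphSub B M φ) = B := by
  ext c
  simp only [mem_bas, mem_graphSub]
  constructor
  · rintro ⟨a, h, -⟩; exact h
  · intro h
    obtain ⟨a, ha⟩ := QuotientAddGroup.mk_surjective (φ ⟨c, h⟩)
    exact ⟨a, h, ha.symm⟩

lemma graphSub_fib (B : AddSubgroup C) (M : AddSubgroup A) (φ : B →+ A ⧸ M) :
    fib (graphSub B M φ) = M := by
  ext a
  rw [mem_fib, mem_graphSub]
  constructor
  · rintro ⟨h, h2⟩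
    have : φ ⟨0, h⟩ = 0 := φ.map_zero
    rw [this, eq_comm, QuotientAddGroup.eq_zero_iff] at h2
    exact h2
  · intro h
    refine ⟨B.zero_mem, ?_⟩
    rw [(QuotientAddGroup.eq_zero_iff a).2 h]
    exact φ.map_zero

lemma graphSub_bijective (B : AddSubgroup C) (M : AddSubgroup A) : Function.Bijective
    (fun φ : B →+ A ⧸ M => (⟨graphSub B M φ, graphSub_bas B M φ, graphSub_fib B M φ⟩ :
      {N : AddSubgroup (C × A) // bas N = B ∧ fib N = M})) := by
  constructor
  · intro φ ψ h
    simp only [Subtype.mk.injEq] at h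
    ext ⟨c, hc⟩
    obtain ⟨a, ha⟩ := QuotientAddGroup.mk_surjective (φ ⟨c, hc⟩)
    have : (c, a) ∈ graphSub B M φ := ⟨hc, ha.symm⟩
    rw [h] at this
    obtain ⟨_, h2⟩ := this
    rw [← ha, ← h2]
  · rintro ⟨N, rfl, rfl⟩
    have hex : ∀ b : bas N, ∃ a, ((b : C), a) ∈ N := fun b => mem_bas.1 b.2
    choose s hs using hex
    have huniq : ∀ (c : C) (a a' : A), (c, a) ∈ N → (c, a') ∈ N →
        (a : A ⧸ fib N) = (a' : A ⧸ fib N) := by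
      intro c a a' h h'
      rw [QuotientAddGroup.eq, mem_fib]
      have := N.add_mem (N.neg_mem h) h'
      simpa using this
    let φ : bas N →+ A ⧸ fib N := AddMonoidHom.mk' (fun b => (s b : A ⧸ fib N)) (by
      intro b b'
      rw [← QuotientAddGroup.mk_add]
      exact huniq _ _ _ (hs (b + b')) (by simpa using N.add_mem (hs b) (hs b')))
    refine ⟨φ, ?_⟩
    simp only [Subtype.mk.injEq]
    ext ⟨c, a⟩
    rw [mem_graphSub]
    constructor
    · rintro ⟨h, h2⟩
      have h3 : (s ⟨c, h⟩ : A ⧸ fib N) = a := h2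
      rw [QuotientAddGroup.eq, mem_fib] at h3
      have := N.add_mem (hs ⟨c, h⟩) h3
      simpa using this
    · intro h
      have hc : c ∈ bas N := mem_bas.2 ⟨a, h⟩
      exact ⟨hc, huniq _ _ _ (hs ⟨c, hc⟩) h⟩

noncomputable def graphEquiv (B : AddSubgroup C) (M : AddSubgroup A) :
    (B →+ A ⧸ M) ≃ {N : AddSubgroup (C × A) // bas N = B ∧ fib N = M} :=
  Equiv.ofBijective _ (graphSub_bijective B M)

lemma smul_mem_of_index (B : AddSubgroup C) (c : C) : B.index • c ∈ B := by
  exact AddSubgroup.nsmul_index_mem B c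

variable [Module.Free ℤ C] [Module.Finite ℤ C]

lemma finrank_sub (B : AddSubgroup C) : Module.Finite ℤ B ∧ Module.Free ℤ B ∧
    (B.index ≠ 0 → Module.finrank ℤ B = Module.finrank ℤ C) := by
  have hfin : Module.Finite ℤ B :=
    Module.Finite.of_injective (B.subtype.toIntLinearMap) Subtype.val_injective
  have hfree : Module.Free ℤ B :=
    inferInstanceAs (Module.Free ℤ (AddSubgroup.toIntSubmodule B))
  refine ⟨hfin, hfree, fun h => le_antisymm ?_ ?_⟩
  · exact LinearMap.finrank_le_finrank_of_injective (f := B.subtype.toIntLinearMap)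
      Subtype.val_injective
  · let g : C →+ B := AddMonoidHom.mk' (fun c => ⟨B.index • c, smul_mem_of_index B c⟩) (by
      intro a b; ext; simp)
    refine LinearMap.finrank_le_finrank_of_injective (f := g.toIntLinearMap) ?_
    intro a b hab
    have h1 : B.index • a = B.index • b := congrArg Subtype.val hab
    have h2 : (B.index : ℤ) • a = (B.index : ℤ) • b := by simpa using h1
    exact smul_right_injective C (Int.natCast_ne_zero.2 h) h2

lemma card_hom (B : AddSubgroup C) (h : B.index ≠ 0) (Q : Type*) [AddCommGroup Q] :
    Nat.card (B →+ Q) = Nat.card Q ^ Module.finrank ℤ C := by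
  obtain ⟨h1, h2, h3⟩ := finrank_sub B
  rw [← h3 h, Nat.card_congr (addMonoidHomLequivInt ℤ).toEquiv,
    ← Nat.card_congr ((Module.finBasis ℤ B).constr ℤ).toEquiv, Nat.card_fun, Nat.card_fin]

end groups

end HeisZeta


namespace HeisZeta

open Finset
open scoped PowerSeries.WithPiTopology

section groups
variable {A C : Type*} [AddCommGroup A] [AddCommGroup C]

/-- generating series of subgroups of `p`-power index with a property -/
noncomputable def cnt (p : ℕ) (s : AddSubgroup A → Prop) : PowerSeries ℚ :=
  PowerSeries.mk fun n => (Nat.card {N : AddSubgroup A // s N ∧ N.index = p ^ n} : ℚ)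

lemma cnt_equiv (p : ℕ) (e : A ≃+ C) (s : AddSubgroup A → Prop) (t : AddSubgroup C → Prop)
    (h : ∀ N, s N ↔ t (N.map e.toAddMonoidHom)) : cnt p s = cnt p t := by
  ext n
  simp only [cnt, PowerSeries.coeff_mk]
  congr 1
  refine Nat.card_congr (Equiv.subtypeEquiv e.mapAddSubgroup.toEquiv ?_)
  intro N
  rw [h]
  have : (N.map e.toAddMonoidHom).index = N.index := AddSubgroup.index_map_equiv N e
  exact and_congr Iff.rfl (by rw [← this]; rfl)

lemma finite_index_eq [Module.Finite ℤ A] (n : ℕ) (hn : n ≠ 0) :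
    {N : AddSubgroup A | N.index = n}.Finite := by
  let Z : AddSubgroup A := (nsmulAddMonoidHom n : A →+ A).range
  have hZ : Finite (A ⧸ Z) := by
    have : Module.Finite ℤ (A ⧸ Z) :=
      Module.Finite.of_surjective (QuotientAddGroup.mk' Z).toIntLinearMap
        (QuotientAddGroup.mk'_surjective Z)
    refine Module.finite_of_fg_torsion _ ?_
    intro x
    obtain ⟨a, rfl⟩ := QuotientAddGroup.mk_surjective x
    refine ⟨⟨(n : ℤ), mem_nonZeroDivisors_of_ne_zero (by simpa using hn)⟩, ?_⟩
    change (n : ℤ) • (a : A ⧸ Z) = 0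
    rw [natCast_zsmul, ← QuotientAddGroup.mk_nsmul, QuotientAddGroup.eq_zero_iff]
    exact ⟨a, rfl⟩
  have hinj : Set.InjOn (fun N : AddSubgroup A => N.map (QuotientAddGroup.mk' Z))
      {N : AddSubgroup A | N.index = n} := by
    have key : ∀ N : AddSubgroup A, N.index = n →
        (N.map (QuotientAddGroup.mk' Z)).comap (QuotientAddGroup.mk' Z) = N := by
      intro N hN
      rw [AddSubgroup.comap_map_eq, QuotientAddGroup.ker_mk', sup_eq_left]
      rintro _ ⟨a, rfl⟩
      rw [← hN]
      exact AddSubgroup.nsmul_index_mem N a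
    intro N hN N' hN' h
    rw [← key N hN, ← key N' hN']
    exact congrArg (AddSubgroup.comap (QuotientAddGroup.mk' Z)) h
  exact Set.Finite.of_finite_image (Set.toFinite _) hinj

lemma cnt_fiber [Module.Free ℤ C] [Module.Finite ℤ C] {p : ℕ} (hp : p.Prime)
    (S : AddSubgroup C → Prop) (M : AddSubgroup A) {k : ℕ} (hM : M.index = p ^ k) :
    cnt p (fun N : AddSubgroup (C × A) => S (bas N) ∧ fib N = M) =
      PowerSeries.C (p : ℚ) ^ (k * Module.finrank ℤ C) * PowerSeries.X ^ k * cnt p S := by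
  ext n
  rw [← map_pow, mul_assoc, PowerSeries.coeff_C_mul, PowerSeries.coeff_X_pow_mul']
  simp only [cnt, PowerSeries.coeff_mk]
  split_ifs with hkn
  · rw [← Nat.cast_pow, ← Nat.cast_mul]
    congr 1
    have e1 : {N : AddSubgroup (C × A) // (S (bas N) ∧ fib N = M) ∧ N.index = p ^ n} ≃
        Σ L : {L : AddSubgroup C // S L ∧ L.index = p ^ (n - k)},
          {N : AddSubgroup (C × A) // bas N = L.1 ∧ fib N = M} :=
      { toFun := fun N => ⟨⟨bas N.1, N.2.1.1, by
            have h1 := index_eq N.1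
            rw [N.2.1.2, N.2.2, hM] at h1
            exact (Nat.eq_of_mul_eq_mul_right (pow_pos hp.pos k)
              ((Nat.pow_sub_mul_pow p hkn).trans h1)).symm⟩,
            ⟨N.1, rfl, N.2.1.2⟩⟩
        invFun := fun x => ⟨x.2.1, ⟨by rw [x.2.2.1]; exact x.1.2.1, x.2.2.2⟩, by
            rw [index_eq, x.2.2.1, x.2.2.2, x.1.2.2, hM, ← pow_add, Nat.sub_add_cancel hkn]⟩
        left_inv := fun N => rfl
        right_inv := by
          rintro ⟨⟨L, h1, h2⟩, ⟨N, h3, h4⟩⟩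
          simp only at h3
          subst h3
          rfl }
    have e2 : ∀ L : {L : AddSubgroup C // S L ∧ L.index = p ^ (n - k)},
        Nonempty ({N : AddSubgroup (C × A) // bas N = L.1 ∧ fib N = M} ≃
          Fin (p ^ (k * Module.finrank ℤ C))) := by
      intro L
      have hc := card_hom L.1 (by rw [L.2.2]; exact (pow_pos hp.pos _).ne') (A ⧸ M)
      have : Nat.card (A ⧸ M) = p ^ k := hM
      rw [this, Nat.card_congr (graphEquiv L.1 M), ← pow_mul] at hc
      have : Finite {N : AddSubgroup (C × A) // bas N = L.1 ∧ fib N = M} :=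
        Nat.finite_of_card_ne_zero (by rw [hc]; exact (pow_pos hp.pos _).ne')
      exact ⟨Finite.equivFinOfCardEq hc⟩
    rw [Nat.card_congr (e1.trans (Equiv.sigmaCongrRight fun L => (e2 L).some)),
      Nat.card_congr (Equiv.sigmaEquivProd _ _), Nat.card_prod, Nat.card_fin, mul_comm]
  · rw [mul_zero, Nat.cast_eq_zero, Nat.card_eq_zero]
    left
    constructor
    rintro ⟨N, ⟨h1, h2⟩, h3⟩
    have h4 := index_eq N
    rw [h3, h2, hM] at h4
    have : p ^ k ∣ p ^ n := ⟨_, by rw [h4, mul_comm]⟩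
    exact hkn ((Nat.pow_dvd_pow_iff_le_right hp.one_lt).1 this)

lemma cnt_fiber_zero {p : ℕ} (hp : p.Prime)
    (S : AddSubgroup (C × A) → Prop) (M : AddSubgroup A) (hM : ∀ k, M.index ≠ p ^ k) :
    cnt p (fun N : AddSubgroup (C × A) => S N ∧ fib N = M) = 0 := by
  ext n
  simp only [cnt, PowerSeries.coeff_mk, map_zero, Nat.cast_eq_zero, Nat.card_eq_zero]
  left
  constructor
  rintro ⟨N, ⟨h1, h2⟩, h3⟩
  have h4 := index_eq N
  rw [h3, h2] at h4
  obtain ⟨k, -, hk⟩ := (Nat.dvd_prime_pow hp).1 (Dvd.intro_left _ h4.symm)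
  exact hM k hk

lemma hasSum_cnt [Module.Finite ℤ A] {β : Type*} {p : ℕ} (hp : p.Prime)
    (S : AddSubgroup A → Prop) (g : AddSubgroup A → β) :
    HasSum (fun b => cnt p (fun N => S N ∧ g N = b)) (cnt p S) := by
  have := hasSum_card (fun n (N : AddSubgroup A) => S N ∧ N.index = p ^ n)
    (fun n => (finite_index_eq (p ^ n) (pow_pos hp.pos n).ne').subset (fun N h => h.2)) g
  have h2 : (fun b => cnt p (fun N => S N ∧ g N = b)) = fun b => PowerSeries.mk fun n =>
      (Nat.card {N : AddSubgroup A // (S N ∧ N.index = p ^ n) ∧ g N = b} : ℚ) := by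
    funext b
    ext n
    simp only [cnt, PowerSeries.coeff_mk]
    congr 1
    exact Nat.card_congr (Equiv.subtypeEquivRight fun N => by tauto)
  rw [h2]
  exact this

end groups

lemma int_subgroup_eq (n : ℕ) (M : AddSubgroup ℤ) :
    M.index = n ↔ M = AddSubgroup.zmultiples (n : ℤ) := by
  constructor
  · intro h
    obtain ⟨a, rfl⟩ := Int.subgroup_cyclic M
    rw [← AddSubgroup.zmultiples_eq_closure] at h ⊢
    rw [Int.index_zmultiples] at h
    rw [← h, Int.zmultiples_natAbs]
  · rintro rfl
    simp [Int.index_zmultiples]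

lemma cnt_pi (p : ℕ) (hp : p.Prime) (D : ℕ) :
    cnt p (fun _ : AddSubgroup (Fin D → ℤ) => True) *
      ∏ i ∈ range D, (1 - PowerSeries.C (p : ℚ) ^ i * PowerSeries.X) = 1 := by
  induction D with
  | zero =>
    rw [prod_range_zero, mul_one]
    ext n
    simp only [cnt, PowerSeries.coeff_mk, PowerSeries.coeff_one, true_and]
    have h1 : ∀ N : AddSubgroup (Fin 0 → ℤ), N.index = 1 := fun N => by
      rw [AddSubgroup.index_eq_one]; exact Subsingleton.elim _ _
    simp only [h1]
    split_ifs with hn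
    · subst hn; simp
    · have : 1 ≠ p ^ n := (Nat.one_lt_pow hn hp.one_lt).ne
      simp [this]
  | succ D ih =>
    have e : cnt p (fun _ : AddSubgroup (Fin (D + 1) → ℤ) => True) =
        cnt p (fun _ : AddSubgroup ((Fin D → ℤ) × ℤ) => True) := by
      refine cnt_equiv p (((Fin.consLinearEquiv ℤ (fun _ : Fin (D + 1) => ℤ)).symm.toAddEquiv).trans
        AddEquiv.prodComm) _ _ (by simp)
    have h1 := hasSum_cnt hp (fun _ : AddSubgroup ((Fin D → ℤ) × ℤ) => True) fib
    have hinj : Function.Injective (fun k : ℕ => AddSubgroup.zmultiples ((p ^ k : ℕ) : ℤ)) := by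
      intro k l hkl
      have := (int_subgroup_eq (p ^ l) _).2 hkl
      rw [Int.index_zmultiples, Int.natAbs_natCast] at this
      exact Nat.pow_right_injective hp.two_le this
    rw [← hinj.hasSum_iff] at h1
    · have h2 : HasSum (fun k : ℕ => (PowerSeries.C (p : ℚ) ^ D * PowerSeries.X) ^ k *
          cnt p (fun _ : AddSubgroup (Fin D → ℤ) => True))
          (cnt p (fun _ : AddSubgroup ((Fin D → ℤ) × ℤ) => True)) := by
        convert h1 using 2 with k
        have := cnt_fiber hp (fun _ : AddSubgroup (Fin D → ℤ) => True)
          (AddSubgroup.zmultiples ((p ^ k : ℕ) : ℤ)) ((int_subgroup_eq (p ^ k) _).2 rfl)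
        rw [Function.comp_apply, this, mul_pow, ← pow_mul, Module.finrank_fin_fun, mul_comm k D]
      have hc : (PowerSeries.C (p : ℚ) ^ D * PowerSeries.X).constantCoeff = 0 := by simp
      have h3 := (PowerSeries.WithPiTopology.summable_pow_of_constantCoeff_eq_zero hc).hasSum.mul_right
        (cnt p (fun _ : AddSubgroup (Fin D → ℤ) => True))
      have h4 := h2.unique h3
      have h5 := PowerSeries.WithPiTopology.tsum_pow_mul_one_sub_of_constantCoeff_eq_zero hc
      rw [e, h4, prod_range_succ]
      calc _ = ((∑' i, (PowerSeries.C (p : ℚ) ^ D * PowerSeries.X) ^ i) *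
            (1 - PowerSeries.C (p : ℚ) ^ D * PowerSeries.X)) *
            (cnt p (fun _ : AddSubgroup (Fin D → ℤ) => True) *
      ∏ i ∈ range D, (1 - PowerSeries.C (p : ℚ) ^ i * PowerSeries.X)) := by ring
        _ = 1 := by rw [ih, h5, one_mul]
    · intro M hM
      refine cnt_fiber_zero hp _ M fun k hk => hM ⟨k, ?_⟩
      exact ((int_subgroup_eq _ _).1 hk).symm

lemma cnt_free {A : Type*} [AddCommGroup A] [Module.Free ℤ A] [Module.Finite ℤ A] (p : ℕ)
    (hp : p.Prime) :
    cnt p (fun _ : AddSubgroup A => True) *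
      ∏ i ∈ range (Module.finrank ℤ A), (1 - PowerSeries.C (p : ℚ) ^ i * PowerSeries.X) = 1 := by
  refine Eq.trans ?_ (cnt_pi p hp (Module.finrank ℤ A))
  refine congrArg (· * _) ?_
  exact cnt_equiv p (Module.finBasis ℤ A).equivFun.toAddEquiv _ _ (by simp)

end HeisZeta


namespace HeisZeta

open Finset
open scoped PowerSeries.WithPiTopology

lemma cnt_le {C : Type*} [AddCommGroup C] [Module.Free ℤ C] [Module.Finite ℤ C]
    {p : ℕ} (hp : p.Prime) (B : AddSubgroup C) {e : ℕ} (hB : B.index = p ^ e) :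
    cnt p (fun L : AddSubgroup C => L ≤ B) *
      ∏ i ∈ range (Module.finrank ℤ C), (1 - PowerSeries.C (p : ℚ) ^ i * PowerSeries.X) =
    PowerSeries.X ^ e := by
  obtain ⟨h1, h2, h3⟩ := finrank_sub B
  have key : cnt p (fun L : AddSubgroup C => L ≤ B) =
      PowerSeries.X ^ e * cnt p (fun _ : AddSubgroup B => True) := by
    ext n
    rw [PowerSeries.coeff_X_pow_mul']
    simp only [cnt, PowerSeries.coeff_mk]
    split_ifs with hen
    · congr 1
      refine Nat.card_congr ?_
      refine
        { toFun := fun L => ⟨L.1.addSubgroupOf B, trivial, ?_⟩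
          invFun := fun L => ⟨L.1.map B.subtype, AddSubgroup.map_subtype_le _, ?_⟩
          left_inv := ?_
          right_inv := ?_ }
      · have h4 := AddSubgroup.relIndex_mul_index L.2.1
        rw [L.2.2, hB] at h4
        exact Nat.eq_of_mul_eq_mul_right (pow_pos hp.pos e)
          (h4.trans (Nat.pow_sub_mul_pow p hen).symm)
      · rw [AddSubgroup.index_map_subtype, L.2.2, hB, Nat.pow_sub_mul_pow p hen]
      · intro L
        apply Subtype.ext
        exact AddSubgroup.map_addSubgroupOf_eq_of_le L.2.1
      · intro L
        apply Subtype.ext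
        exact AddSubgroup.comap_map_eq_self_of_injective Subtype.val_injective L.1
    · rw [Nat.cast_eq_zero, Nat.card_eq_zero]
      left
      constructor
      rintro ⟨L, h1, h2⟩
      have h4 := AddSubgroup.relIndex_mul_index h1
      rw [h2, hB] at h4
      exact hen ((Nat.pow_dvd_pow_iff_le_right hp.one_lt).1 (Dvd.intro_left _ h4))
  have h5 := cnt_free (A := B) p hp
  rw [h3 (by rw [hB]; exact (pow_pos hp.pos _).ne')] at h5
  rw [key, mul_assoc, h5, mul_one]

section heis
variable {R : Type*} [CommRing R]

/-- the largest ideal inside an additive subgroup -/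
def core (M : AddSubgroup R) : Ideal R where
  carrier := {x | ∀ t, t * x ∈ M}
  zero_mem' := fun t => by simp
  add_mem' := fun {a b} ha hb t => by rw [mul_add]; exact M.add_mem (ha t) (hb t)
  smul_mem' := fun c x hx t => by rw [smul_eq_mul, ← mul_assoc]; exact hx _

lemma mem_core {M : AddSubgroup R} {x : R} : x ∈ core M ↔ ∀ t, t * x ∈ M := Iff.rfl

lemma core_le (M : AddSubgroup R) : (core M).toAddSubgroup ≤ M := fun x hx => by
  simpa using hx 1

lemma le_core {M : AddSubgroup R} {I : Ideal R} : I ≤ core M ↔ I.toAddSubgroup ≤ M := by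
  constructor
  · intro h x hx; exact core_le M (h hx)
  · intro h x hx t; exact h (I.mul_mem_left t hx)

def coreSq (M : AddSubgroup R) : AddSubgroup (R × R) :=
  (core M).toAddSubgroup.prod (core M).toAddSubgroup

lemma mem_coreSq {M : AddSubgroup R} {c : R × R} :
    c ∈ coreSq M ↔ (∀ t, t * c.1 ∈ M) ∧ (∀ t, t * c.2 ∈ M) := Iff.rfl

def ofH (a : Heisenberg R) : (R × R) × R := ((a.x, a.y), a.z)
def toH (a : (R × R) × R) : Heisenberg R := ⟨a.1.1, a.1.2, a.2⟩

/-- the correspondence -/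
lemma normal_facts (H : Subgroup (Heisenberg R)) (hH : H.Normal) (a : Heisenberg R) (ha : a ∈ H)
    (t : R) : (⟨0, 0, t * a.x⟩ : Heisenberg R) ∈ H ∧ (⟨0, 0, t * a.y⟩ : Heisenberg R) ∈ H := by
  constructor
  · have h1 := H.mul_mem (hH.conj_mem a ha ⟨0, -t, 0⟩) (H.inv_mem ha)
    convert h1 using 1
    ext <;> simp [Heisenberg.mul_def, Heisenberg.inv_def]
    ring
  · have h1 := H.mul_mem (hH.conj_mem a ha ⟨t, 0, 0⟩) (H.inv_mem ha)
    convert h1 using 1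
    ext <;> simp [Heisenberg.mul_def, Heisenberg.inv_def]
    ring

lemma mem_shift (H : Subgroup (Heisenberg R)) {x y z w : R} (h : (⟨0, 0, w⟩ : Heisenberg R) ∈ H) :
    (⟨x, y, z⟩ : Heisenberg R) ∈ H ↔ (⟨x, y, z + w⟩ : Heisenberg R) ∈ H := by
  have : (⟨x, y, z + w⟩ : Heisenberg R) = ⟨x, y, z⟩ * ⟨0, 0, w⟩ := by
    ext <;> simp [Heisenberg.mul_def]
  rw [this, H.mul_mem_cancel_right h]

def toAdd (H : Subgroup (Heisenberg R)) (hH : H.Normal) : AddSubgroup ((R × R) × R) where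
  carrier := {a | toH a ∈ H}
  zero_mem' := H.one_mem
  add_mem' := by
    rintro a b ha hb
    have h1 := H.mul_mem ha hb
    have h2 := (normal_facts H hH (toH b) hb a.1.1).2
    change (⟨a.1.1 + b.1.1, a.1.2 + b.1.2, a.2 + b.2⟩ : Heisenberg R) ∈ H
    rw [mem_shift H h2]
    exact h1
  neg_mem' := by
    rintro a ha
    have h1 := H.inv_mem ha
    have h2 := (normal_facts H hH (toH a) ha a.1.1).2
    change (⟨-a.1.1, -a.1.2, -a.2⟩ : Heisenberg R) ∈ H
    rw [mem_shift H h2]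
    convert h1 using 1
    ext <;> simp [Heisenberg.inv_def, toH]
    ring

lemma mem_toAdd {H : Subgroup (Heisenberg R)} {hH : H.Normal} {a : (R × R) × R} :
    a ∈ toAdd H hH ↔ toH a ∈ H := Iff.rfl

lemma toAdd_compat (H : Subgroup (Heisenberg R)) (hH : H.Normal) :
    bas (toAdd H hH) ≤ coreSq (fib (toAdd H hH)) := by
  intro c hc
  obtain ⟨z, hz⟩ := mem_bas.1 hc
  rw [mem_coreSq]
  exact ⟨fun t => (normal_facts H hH _ hz t).1, fun t => (normal_facts H hH _ hz t).2⟩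

lemma add_shift (N : AddSubgroup ((R × R) × R)) {x y z w : R} (h : w ∈ fib N) :
    ((x, y), z) ∈ N ↔ ((x, y), z + w) ∈ N := by
  have : ((x, y), z + w) = ((x, y), z) + ((0 : R × R), w) := by simp
  rw [this, N.add_mem_cancel_right (mem_fib.1 h)]

lemma compat_mem {N : AddSubgroup ((R × R) × R)} (hN : bas N ≤ coreSq (fib N)) {a : (R × R) × R}
    (ha : a ∈ N) (t : R) : t * a.1.1 ∈ fib N ∧ t * a.1.2 ∈ fib N := by
  have := hN (mem_bas.2 ⟨a.2, ha⟩ : a.1 ∈ bas N)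
  rw [mem_coreSq] at this
  exact ⟨this.1 t, this.2 t⟩

def ofAdd (N : AddSubgroup ((R × R) × R)) (hN : bas N ≤ coreSq (fib N)) :
    Subgroup (Heisenberg R) where
  carrier := {a | ofH a ∈ N}
  one_mem' := N.zero_mem
  mul_mem' := by
    rintro a b ha hb
    have h1 := N.add_mem ha hb
    have h2 : a.x * b.y ∈ fib N := (compat_mem hN hb a.x).2
    change ((a.x + b.x, a.y + b.y), a.z + b.z + a.x * b.y) ∈ N
    rw [← add_shift N h2]
    exact h1
  inv_mem' := by
    rintro a ha
    have h1 := N.neg_mem ha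
    have h2 : a.x * a.y ∈ fib N := (compat_mem hN ha a.x).2
    change ((-a.x, -a.y), a.x * a.y - a.z) ∈ N
    rw [sub_eq_neg_add, ← add_shift N h2]
    exact h1

lemma ofAdd_normal (N : AddSubgroup ((R × R) × R)) (hN : bas N ≤ coreSq (fib N)) :
    (ofAdd N hN).Normal := by
  constructor
  intro a ha g
  have h1 := (compat_mem hN ha g.x).2
  have h2 := (compat_mem hN ha (-g.y)).1
  have h3 : g.x * a.y + -g.y * a.x ∈ fib N := (fib N).add_mem h1 h2
  have : ofH (g * a * g⁻¹) = ((a.x, a.y), a.z + (g.x * a.y + -g.y * a.x)) := by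
    simp [ofH, Heisenberg.mul_def, Heisenberg.inv_def]
    ring
  change ofH (g * a * g⁻¹) ∈ N
  rw [this, ← add_shift N h3]
  exact ha

lemma index_toAdd (H : Subgroup (Heisenberg R)) (hH : H.Normal) :
    (toAdd H hH).index = H.index := by
  refine Nat.card_congr (Quotient.congr ⟨toH, ofH, fun _ => rfl, fun _ => rfl⟩ ?_)
  intro a b
  change (QuotientAddGroup.leftRel _) a b ↔ (QuotientGroup.leftRel _) (toH a) (toH b)
  rw [QuotientAddGroup.leftRel_apply, QuotientGroup.leftRel_apply, mem_toAdd]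
  have e : (toH a)⁻¹ * toH b = ⟨(toH (-a + b)).x, (toH (-a + b)).y,
      (toH (-a + b)).z + (-a.1.1) * (toH (-a + b)).y⟩ := by
    ext <;> simp [toH, Heisenberg.mul_def, Heisenberg.inv_def]
    ring
  constructor
  · intro h
    rw [e, ← mem_shift H (normal_facts H hH _ h _).2]
    exact h
  · intro h
    have h2 := (normal_facts H hH _ h (-a.1.1)).2
    have h3 := (mem_shift H (x := (toH (-a + b)).x) (y := (toH (-a + b)).y)
      (z := (toH (-a + b)).z) h2).2
    apply h3
    rw [e] at h
    rw [e]
    exact h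

lemma normalCount (n : ℕ) : normalSubgroupCount (Heisenberg R) n =
    Nat.card {N : AddSubgroup ((R × R) × R) // bas N ≤ coreSq (fib N) ∧ N.index = n} := by
  refine Nat.card_congr
    { toFun := fun H => ⟨toAdd H.1 H.2.1, toAdd_compat _ _, by rw [index_toAdd, H.2.2]⟩
      invFun := fun N => ⟨ofAdd N.1 N.2.1, ofAdd_normal _ _, ?_⟩
      left_inv := fun H => rfl
      right_inv := fun N => rfl }
  rw [← index_toAdd _ (ofAdd_normal _ N.2.1)]
  exact N.2.2

variable [Module.Free ℤ R] [Module.Finite ℤ R]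

lemma zeta_hasSum {p : ℕ} (hp : p.Prime) :
    HasSum (fun M : AddSubgroup R => cnt p (fun N : AddSubgroup ((R × R) × R) =>
        bas N ≤ coreSq M ∧ fib N = M))
      (PowerSeries.mk fun i => (normalSubgroupCount (Heisenberg R) (p ^ i) : ℚ)) := by
  have h := hasSum_cnt hp (fun N : AddSubgroup ((R × R) × R) => bas N ≤ coreSq (fib N)) fib
  have e : (PowerSeries.mk fun i => (normalSubgroupCount (Heisenberg R) (p ^ i) : ℚ)) =
      cnt p (fun N : AddSubgroup ((R × R) × R) => bas N ≤ coreSq (fib N)) := by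
    simp only [normalCount]; rfl
  rw [e]
  convert h using 2 with M
  congr 1
  funext N
  apply propext
  constructor
  · rintro ⟨h1, rfl⟩; exact ⟨h1, rfl⟩
  · rintro ⟨h1, rfl⟩; exact ⟨h1, rfl⟩

lemma zeta_term {p : ℕ} (hp : p.Prime) (M : AddSubgroup R) {k e : ℕ} (hM : M.index = p ^ k)
    (he : (coreSq M).index = p ^ e) :
    cnt p (fun N : AddSubgroup ((R × R) × R) => bas N ≤ coreSq M ∧ fib N = M) *
      ∏ i ∈ range (2 * Module.finrank ℤ R), (1 - PowerSeries.C (p : ℚ) ^ i * PowerSeries.X) =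
    (PowerSeries.C (p : ℚ) ^ (2 * Module.finrank ℤ R) * PowerSeries.X) ^ k *
      PowerSeries.X ^ e := by
  have hrk : Module.finrank ℤ (R × R) = 2 * Module.finrank ℤ R := by
    rw [Module.finrank_prod, two_mul]
  rw [cnt_fiber hp (fun L => L ≤ coreSq M) M hM, hrk, mul_assoc, ← hrk, cnt_le hp _ he, hrk,
    mul_pow, ← pow_mul, mul_comm k]

end heis

end HeisZeta


namespace HeisZeta

open Finset

section el
variable {A C : Type*} [AddCommGroup A] [AddCommGroup C]

lemma card_eq_bas_fib (N : AddSubgroup (C × A)) :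
    Nat.card N = Nat.card (bas N) * Nat.card (fib N) := by
  let g : N →+ C := (AddMonoidHom.fst C A).comp N.subtype
  have h1 := AddSubgroup.index_mul_card g.ker
  rw [AddSubgroup.index_ker] at h1
  have h2 : g.range = bas N := by
    ext c
    simp only [AddMonoidHom.mem_range, mem_bas, g]
    constructor
    · rintro ⟨⟨⟨c', a⟩, h⟩, rfl⟩; exact ⟨a, h⟩
    · rintro ⟨a, h⟩; exact ⟨⟨_, h⟩, rfl⟩
  have h3 : Nat.card g.ker = Nat.card (fib N) := by
    refine Nat.card_congr
      { toFun := fun x => ⟨x.1.1.2, ?_⟩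
        invFun := fun a => ⟨⟨(0, a.1), a.2⟩, rfl⟩
        left_inv := ?_
        right_inv := fun a => rfl }
    · obtain ⟨⟨⟨c, a⟩, h⟩, h'⟩ := x
      have : c = 0 := h'
      subst this
      exact h
    · rintro ⟨⟨⟨c, a⟩, h⟩, h'⟩
      have : c = 0 := h'
      subst this
      rfl
  rw [← h1, h2, h3]

lemma gen_card_hom {F : Type*} [Field F] [Module F C] [Module F A] [Finite C] [Finite F] {k : ℕ}
    (hk : Nat.card C = Nat.card F ^ k) : Nat.card (C →ₗ[F] A) = Nat.card A ^ k := by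
  have : Module.Finite F C := Module.Finite.of_finite
  have h1 := Module.natCard_eq_pow_finrank (K := F) (V := C)
  rw [hk] at h1
  rw [Nat.pow_right_injective Finite.one_lt_card h1,
    ← Nat.card_congr ((Module.finBasis F C).constr ℤ).toEquiv, Nat.card_fun, Nat.card_fin]

lemma gen_equiv {F : Type*} [Field F] [Module F C] [Finite C] [Finite F] {k : ℕ}
    (hk : Nat.card C = Nat.card F ^ k) : Nonempty (C ≃+ (Fin k → F)) := by
  have : Module.Finite F C := Module.Finite.of_finite
  have h1 := Module.natCard_eq_pow_finrank (K := F) (V := C)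
  rw [hk] at h1
  rw [Nat.pow_right_injective Finite.one_lt_card h1]
  exact ⟨(Module.finBasis F C).equivFun.toAddEquiv⟩

lemma gen_compl {F : Type*} [Field F] [Module F C] (C0 : AddSubgroup C)
    (h0 : ∀ (t : F) (c : C), c ∈ C0 → t • c ∈ C0) :
    ∃ C1 : AddSubgroup C, IsCompl C0 C1 := by
  let F0 : Submodule F C := { C0 with smul_mem' := fun t c h => h0 t c h }
  obtain ⟨F1, hF⟩ := F0.exists_isCompl
  refine ⟨F1.toAddSubgroup, ?_, ?_⟩
  · rw [disjoint_iff, eq_bot_iff]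
    intro x hx
    have := hF.inf_eq_bot.le (show x ∈ F0 ⊓ F1 from hx)
    simpa using this
  · rw [codisjoint_iff, eq_top_iff]
    intro x _
    obtain ⟨y, hy, z, hz, rfl⟩ := Submodule.mem_sup.1 (hF.sup_eq_top.ge (Submodule.mem_top (x := x)))
    exact AddSubgroup.add_mem_sup hy hz

lemma card_hom_zmod {p : ℕ} (hp : p.Prime) {k : ℕ} (hC : ∀ x : C, p • x = 0)
    (hA : ∀ x : A, p • x = 0) (hk : Nat.card C = p ^ k) :
    Nat.card (C →+ A) = Nat.card A ^ k := by
  have : Fact p.Prime := ⟨hp⟩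
  let mC : Module (ZMod p) C := AddCommGroup.zmodModule hC
  let mA : Module (ZMod p) A := AddCommGroup.zmodModule hA
  have : Finite C := Nat.finite_of_card_ne_zero (by rw [hk]; exact (pow_pos hp.pos _).ne')
  rw [Nat.card_congr (AddMonoidHom.toZModLinearMapEquiv p).toEquiv]
  exact @gen_card_hom A C _ _ (ZMod p) (ZMod.instField p) mC mA _ _ k (by rw [hk, Nat.card_zmod])

/-- number of subgroups of order `p^k` with a fixed fibre -/
lemma card_fiber_el {p : ℕ} (hp : p.Prime) (hC : ∀ x : C, p • x = 0)
    (hA : ∀ x : A, p • x = 0) (M : AddSubgroup A) {i k : ℕ} (hM : Nat.card M = p ^ i)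
    (hi : M.index ≠ 0) :
    Nat.card {N : AddSubgroup (C × A) // fib N = M ∧ Nat.card N = p ^ (k + i)} =
      Nat.card {L : AddSubgroup C // Nat.card L = p ^ k} * M.index ^ k := by
  have e1 : {N : AddSubgroup (C × A) // fib N = M ∧ Nat.card N = p ^ (k + i)} ≃
      Σ L : {L : AddSubgroup C // Nat.card L = p ^ k},
        {N : AddSubgroup (C × A) // bas N = L.1 ∧ fib N = M} :=
    { toFun := fun N => ⟨⟨bas N.1, by
          have h1 := card_eq_bas_fib N.1
          rw [N.2.1, N.2.2, hM] at h1
          exact (Nat.eq_of_mul_eq_mul_right (pow_pos hp.pos i)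
            ((pow_add p k i).symm.trans h1)).symm⟩,
          ⟨N.1, rfl, N.2.1⟩⟩
      invFun := fun x => ⟨x.2.1, x.2.2.2, by
          rw [card_eq_bas_fib, x.2.2.1, x.2.2.2, x.1.2, hM, ← pow_add]⟩
      left_inv := fun N => rfl
      right_inv := by
        rintro ⟨⟨L, h1⟩, ⟨N, h3, h4⟩⟩
        simp only at h3
        subst h3
        rfl }
  have e2 : ∀ L : {L : AddSubgroup C // Nat.card L = p ^ k},
      Nonempty ({N : AddSubgroup (C × A) // bas N = L.1 ∧ fib N = M} ≃ Fin (M.index ^ k)) := by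
    intro L
    have hc := card_hom_zmod (C := L.1) (A := A ⧸ M) hp
      (fun x => Subtype.ext (hC x.1)) (fun x => by
        obtain ⟨a, rfl⟩ := QuotientAddGroup.mk_surjective x
        rw [← QuotientAddGroup.mk_nsmul, hA]; rfl) L.2
    have h5 : Nat.card (A ⧸ M) = M.index := rfl
    rw [h5, Nat.card_congr (graphEquiv L.1 M)] at hc
    have : Finite {N : AddSubgroup (C × A) // bas N = L.1 ∧ fib N = M} :=
      Nat.finite_of_card_ne_zero (by rw [hc]; exact pow_ne_zero _ hi)
    exact ⟨Finite.equivFinOfCardEq hc⟩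
  rw [Nat.card_congr (e1.trans (Equiv.sigmaCongrRight fun L => (e2 L).some)),
    Nat.card_congr (Equiv.sigmaEquivProd _ _), Nat.card_prod, Nat.card_fin]

lemma card_sub_congr (e : A ≃+ C) (m : ℕ) : Nat.card {L : AddSubgroup A // Nat.card L = m} =
    Nat.card {L : AddSubgroup C // Nat.card L = m} := by
  refine Nat.card_congr (Equiv.subtypeEquiv e.mapAddSubgroup.toEquiv ?_)
  intro N
  have : Nat.card N = Nat.card (N.map e.toAddMonoidHom) := Nat.card_congr (e.addSubgroupMap N).toEquiv
  rw [this]; rfl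

end el

lemma fiber_zmod {p : ℕ} (hp : p.Prime) (M : AddSubgroup (ZMod p)) : M = ⊥ ∨ M = ⊤ := by
  have : Fact p.Prime := ⟨hp⟩
  have : IsSimpleAddGroup (ZMod p) := inferInstance
  exact IsSimpleAddGroup.eq_bot_or_eq_top_of_normal M inferInstance

lemma card_sub_pi {p : ℕ} (hp : p.Prime) (n k : ℕ) :
    (Nat.card {L : AddSubgroup (Fin n → ZMod p) // Nat.card L = p ^ k} : ℤ) = gauss (p : ℤ) n k := by
  have : Fact p.Prime := ⟨hp⟩
  have hzero : ∀ n, (Nat.card {L : AddSubgroup (Fin n → ZMod p) // Nat.card L = p ^ 0} : ℤ) =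
      gauss (p : ℤ) n 0 := by
    intro n
    have : Unique {L : AddSubgroup (Fin n → ZMod p) // Nat.card L = p ^ 0} :=
      { default := ⟨⊥, by simp⟩
        uniq := by
          rintro ⟨L, hL⟩
          apply Subtype.ext
          rw [pow_zero] at hL
          exact AddSubgroup.eq_bot_of_card_eq L hL }
    rw [Nat.card_unique]
    simp
  induction n generalizing k with
  | zero =>
    cases k with
    | zero => exact hzero 0
    | succ k =>
    have : IsEmpty {L : AddSubgroup (Fin 0 → ZMod p) // Nat.card L = p ^ (k + 1)} := by
      constructor
      rintro ⟨L, hL⟩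
      rw [Nat.card_of_subsingleton (0 : L)] at hL
      exact (Nat.one_lt_pow (Nat.succ_ne_zero k) hp.one_lt).ne hL
    rw [Nat.card_of_isEmpty, gauss_eq_zero _ (Nat.succ_pos k)]
    rfl
  | succ n ih =>
    cases k with
    | zero => exact hzero (n + 1)
    | succ k =>
    have e : (Fin (n + 1) → ZMod p) ≃+ (Fin n → ZMod p) × ZMod p :=
      ((Fin.consLinearEquiv ℤ (fun _ : Fin (n + 1) => ZMod p)).symm.toAddEquiv).trans
        AddEquiv.prodComm
    have hC : ∀ x : Fin n → ZMod p, p • x = 0 := fun x => by ext i; simp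
    have hA : ∀ x : ZMod p, p • x = 0 := fun x => by simp
    have h1 := card_fiber_el hp hC hA ⊥ (i := 0) (k := k + 1) (by simp) (by
      simp [AddSubgroup.index_bot, hp.ne_zero])
    have h2 := card_fiber_el hp hC hA ⊤ (i := 1) (k := k) (by simp) (by simp)
    have h3 : Nat.card {L : AddSubgroup ((Fin n → ZMod p) × ZMod p) // Nat.card L = p ^ (k + 1)} =
        Nat.card {N : AddSubgroup ((Fin n → ZMod p) × ZMod p) // fib N = ⊥ ∧ Nat.card N = p ^ (k + 1 + 0)} +
        Nat.card {N : AddSubgroup ((Fin n → ZMod p) × ZMod p) // fib N = ⊤ ∧ Nat.card N = p ^ (k + 1)} := by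
      classical
      rw [← Nat.card_sum]
      refine Nat.card_congr (Equiv.trans (Equiv.subtypeEquivRight ?_) (subtypeOrEquiv _ _ ?_))
      · intro N
        rcases fiber_zmod hp (fib N) with h | h <;> simp [h, bot_ne_top, bot_ne_top.symm]
      · rw [Pi.disjoint_iff]
        intro N
        rw [Prop.disjoint_iff]
        rintro ⟨⟨h, -⟩, ⟨h', -⟩⟩
        exact bot_ne_top (h.symm.trans h')
    rw [card_sub_congr e, h3, h1, h2, gauss_succ_succ]
    push_cast
    rw [ih, ih]
    simp [AddSubgroup.index_bot]
    ring

/-- Subgroups of order `p^k` of an elementary abelian group meeting `E0` trivially. -/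
lemma card_compl {E : Type*} [AddCommGroup E] {p : ℕ} (hp : p.Prime) (hE : ∀ x : E, p • x = 0)
    (E0 : AddSubgroup E) {e m : ℕ} (h1 : Nat.card E = p ^ e) (h0 : Nat.card E0 = p ^ m) (k : ℕ) :
    (Nat.card {W : AddSubgroup E // W ⊓ E0 = ⊥ ∧ Nat.card W = p ^ k} : ℤ) =
      (p : ℤ) ^ (m * k) * gauss (p : ℤ) (e - m) k := by
  have : Fact p.Prime := ⟨hp⟩
  let mE : Module (ZMod p) E := AddCommGroup.zmodModule hE
  have : Finite E := Nat.finite_of_card_ne_zero (by rw [h1]; exact (pow_pos hp.pos _).ne')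
  obtain ⟨E1, hE1⟩ := @gen_compl E _ (ZMod p) (ZMod.instField p) mE E0
    (fun t c h => ZMod.smul_mem h t)
  let F0 : Submodule ℤ E := AddSubgroup.toIntSubmodule E0
  let F1 : Submodule ℤ E := AddSubgroup.toIntSubmodule E1
  have hF : IsCompl F0 F1 := (AddSubgroup.toIntSubmodule (M := E)).isCompl_iff.1 hE1
  let ε : (F1 × F0) ≃+ E := (Submodule.prodEquivOfIsCompl F1 F0 hF.symm).toAddEquiv
  have hε : ∀ x, ε x = x.1 + x.2 := fun x => rfl
  have hcard : Nat.card F1 * Nat.card F0 = Nat.card E := by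
    rw [← Nat.card_prod, Nat.card_congr ε.toEquiv]
  have hcF0 : Nat.card F0 = p ^ m := h0
  have hme : m ≤ e := by
    rw [hcF0, h1] at hcard
    exact (Nat.pow_dvd_pow_iff_le_right hp.one_lt).1 (Dvd.intro_left _ hcard)
  have hcF1 : Nat.card F1 = p ^ (e - m) := by
    rw [hcF0, h1, ← Nat.pow_sub_mul_pow p hme] at hcard
    exact Nat.eq_of_mul_eq_mul_right (pow_pos hp.pos m) hcard
  obtain ⟨e1⟩ : Nonempty (F1 ≃+ (Fin (e - m) → ZMod p)) :=
    @gen_equiv F1 _ (ZMod p) (ZMod.instField p)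
      (AddCommGroup.zmodModule fun x => Subtype.ext (hE x.1)) _ _ (e - m)
      (by rw [hcF1, Nat.card_zmod])
  have hk := card_fiber_el (C := F1) (A := F0) hp (fun x => Subtype.ext (hE x.1))
    (fun x => Subtype.ext (hE x.1)) ⊥ (i := 0) (k := k) (by simp) (by
      rw [AddSubgroup.index_bot, hcF0]; exact (pow_pos hp.pos _).ne')
  rw [AddSubgroup.index_bot, hcF0, card_sub_congr e1] at hk
  have e2 : Nat.card {W : AddSubgroup E // W ⊓ E0 = ⊥ ∧ Nat.card W = p ^ k} =
      Nat.card {N : AddSubgroup (F1 × F0) // fib N = ⊥ ∧ Nat.card N = p ^ (k + 0)} := by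
    symm
    refine Nat.card_congr (Equiv.subtypeEquiv ε.mapAddSubgroup.toEquiv ?_)
    intro N
    have h5 : Nat.card N = Nat.card (N.map ε.toAddMonoidHom) :=
      Nat.card_congr (ε.addSubgroupMap N).toEquiv
    have h6 : fib N = ⊥ ↔ N.map ε.toAddMonoidHom ⊓ E0 = ⊥ := by
      rw [eq_bot_iff, eq_bot_iff]
      constructor
      · rintro h x ⟨⟨⟨c, a⟩, hN, rfl⟩, hx0⟩
        have hx : ε (c, a) = c + a := hε _
        have hx1 : (c : E) + a ∈ F0 := by rw [← hx]; exact hx0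
        have hc : (c : E) ∈ F0 := by simpa using F0.sub_mem hx1 a.2
        have hc0 : (c : E) = 0 := by
          have := hF.inf_eq_bot.le ⟨hc, c.2⟩
          simpa using this
        have hc1 : c = 0 := Subtype.ext hc0
        subst hc1
        have ha : a ∈ fib N := hN
        have ha0 : a = 0 := by simpa using h ha
        subst ha0
        exact (map_zero ε)
      · intro h a ha
        have h7 : ε (0, a) ∈ N.map ε.toAddMonoidHom ⊓ E0 := by
          refine ⟨⟨(0, a), ha, rfl⟩, ?_⟩
          have : ε (0, a) = (a : E) := by rw [hε]; simp
          change ε (0, a) ∈ E0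
          rw [this]; exact a.2
        have h8 : ε (0, a) = 0 := by simpa using h h7
        have h9 : ((0 : F1), a) = 0 := ε.injective (h8.trans (map_zero ε).symm)
        exact congrArg Prod.snd h9
    rw [h5, h6]; rfl
  rw [e2, hk, Nat.cast_mul, card_sub_pi hp]
  push_cast
  ring

end HeisZeta


namespace HeisZeta

open Finset

section
variable {A : Type*} [AddCommGroup A]

lemma card_inf_mul_sup (H L : AddSubgroup A) :
    Nat.card (H ⊓ L : AddSubgroup A) * Nat.card (H ⊔ L : AddSubgroup A) =
      Nat.card H * Nat.card L := by
  have h1 := AddSubgroup.relIndex_mul_relIndex ⊥ H (H ⊔ L) bot_le le_sup_left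
  have h2 := AddSubgroup.relIndex_mul_relIndex ⊥ (H ⊓ L) L bot_le inf_le_right
  rw [AddSubgroup.relIndex_sup_left, AddSubgroup.relIndex_bot_left,
    AddSubgroup.relIndex_bot_left] at h1
  rw [AddSubgroup.inf_relIndex_right, AddSubgroup.relIndex_bot_left,
    AddSubgroup.relIndex_bot_left] at h2
  rw [← h1, ← h2]; ring

/-- multiplication by `p` -/
abbrev pm (A : Type*) [AddCommGroup A] (p : ℕ) : A →+ A := nsmulAddMonoidHom p

lemma index_pm (p : ℕ) (M : AddSubgroup A) :
    M.index = (M ⊔ (pm A p).range).index * (M.comap (pm A p)).index := by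
  rw [AddSubgroup.index_comap, ← AddSubgroup.relIndex_mul_index
    (le_sup_left : M ≤ M ⊔ (pm A p).range), AddSubgroup.relIndex_sup_left, mul_comm]

lemma card_ker_eq {Q : Type*} [AddCommGroup Q] [Finite Q] (μ : Q →+ Q) :
    Nat.card μ.ker = μ.range.index := by
  have h1 := AddSubgroup.index_mul_card μ.ker
  rw [AddSubgroup.index_ker] at h1
  have h2 := AddSubgroup.index_mul_card μ.range
  have h3 : 0 < Nat.card μ.range := Nat.card_pos
  refine Nat.eq_of_mul_eq_mul_left h3 ?_
  rw [h1, ← h2, mul_comm]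

/-- Counting in a finite group `Q`. -/
lemma count_Q {Q : Type*} [AddCommGroup Q] [Finite Q] {p : ℕ} (hp : p.Prime) {a m' : ℕ}
    (ha : (pm Q p).range.index = p ^ a) (hm' : ((pm Q p).ker ⊔ (pm Q p).range).index = p ^ m')
    (k : ℕ) :
    (Nat.card {U : AddSubgroup Q // U ⊓ (pm Q p).range = ⊥ ∧ Nat.card U = p ^ k} : ℤ) =
      (p : ℤ) ^ (m' * k) * gauss (p : ℤ) (a - m') k := by
  set μ := pm Q p with hμ
  have hE0 : Nat.card (μ.range.addSubgroupOf μ.ker) = p ^ m' := by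
    have h1 : Nat.card (μ.range.addSubgroupOf μ.ker) = Nat.card (μ.ker ⊓ μ.range : AddSubgroup Q) := by
      rw [inf_comm]
      rw [← AddSubgroup.addSubgroupOf_map_subtype]
      exact Nat.card_congr (AddSubgroup.equivMapOfInjective _ _ (AddSubgroup.subtype_injective _)).toEquiv
    rw [h1, ← hm']
    have h2 := card_inf_mul_sup μ.ker μ.range
    rw [card_ker_eq, AddSubgroup.index_mul_card,
      ← AddSubgroup.index_mul_card (μ.ker ⊔ μ.range)] at h2
    exact Nat.eq_of_mul_eq_mul_right Nat.card_pos h2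
  rw [← card_compl (E := μ.ker) hp (fun x => Subtype.ext x.2) (μ.range.addSubgroupOf μ.ker)
    ((card_ker_eq μ).trans ha) hE0 k]
  congr 1
  have hle : ∀ U : AddSubgroup Q, U ⊓ μ.range = ⊥ → U ≤ μ.ker := by
    intro U hU u hu
    have : μ u ∈ U ⊓ μ.range := ⟨U.nsmul_mem hu p, ⟨u, rfl⟩⟩
    rw [hU] at this
    exact this
  have hc : ∀ W : AddSubgroup μ.ker, Nat.card (W.map μ.ker.subtype) = Nat.card W := fun W =>
    (Nat.card_congr (AddSubgroup.equivMapOfInjective _ _ (AddSubgroup.subtype_injective _)).toEquiv).symm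
  have hi : ∀ W : AddSubgroup μ.ker, W.map μ.ker.subtype ⊓ μ.range = ⊥ ↔
      W ⊓ μ.range.addSubgroupOf μ.ker = ⊥ := by
    intro W
    have : W.map μ.ker.subtype ⊓ μ.range =
        (W ⊓ μ.range.addSubgroupOf μ.ker).map μ.ker.subtype := by
      ext x
      constructor
      · rintro ⟨⟨w, hw, rfl⟩, h⟩
        exact ⟨w, ⟨hw, h⟩, rfl⟩
      · rintro ⟨w, ⟨hw, h⟩, rfl⟩
        exact ⟨⟨w, hw, rfl⟩, h⟩
    rw [this, AddSubgroup.map_eq_bot_iff_of_injective _ (AddSubgroup.subtype_injective _)]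
  symm
  refine Nat.card_congr
    { toFun := fun W => ⟨W.1.map μ.ker.subtype, (hi W.1).2 W.2.1, (hc W.1).trans W.2.2⟩
      invFun := fun U => ⟨U.1.addSubgroupOf μ.ker, ?_, ?_⟩
      left_inv := ?_
      right_inv := ?_ }
  · rw [← hi, AddSubgroup.addSubgroupOf_map_subtype, inf_eq_left.2 (hle U.1 U.2.1)]
    exact U.2.1
  · rw [← hc, AddSubgroup.addSubgroupOf_map_subtype, inf_eq_left.2 (hle U.1 U.2.1)]
    exact U.2.2
  · intro W
    apply Subtype.ext
    exact AddSubgroup.comap_map_eq_self_of_injective (AddSubgroup.subtype_injective _) _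
  · intro U
    apply Subtype.ext
    change (U.1.addSubgroupOf μ.ker).map μ.ker.subtype = U.1
    rw [AddSubgroup.addSubgroupOf_map_subtype, inf_eq_left.2 (hle U.1 U.2.1)]

lemma fiber_count {p : ℕ} (hp : p.Prime)
    (P M' : AddSubgroup A) (hP : P.index ≠ 0) (hPM : P.comap (pm A p) ≤ M') {a m m' : ℕ}
    (ha : (P ⊔ (pm A p).range).index = p ^ a) (hm' : (M' ⊔ (pm A p).range).index = p ^ m')
    (hma : m ≤ a) :
    (Nat.card {M : AddSubgroup A // P ≤ M ∧ M.comap (pm A p) = M' ∧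
      (M ⊔ (pm A p).range).index = p ^ m} : ℤ) = Kc (p : ℤ) a m m' := by
  set N : AddSubgroup A := M'.map (pm A p) ⊔ P with hN
  have hPM' : P ≤ M' := fun x hx => hPM (P.nsmul_mem hx p)
  have hPN : P ≤ N := le_sup_right
  have hNi : N.index ≠ 0 := fun h => hP (by
    have := AddSubgroup.index_dvd_of_le hPN
    rw [h] at this
    exact Nat.eq_zero_of_zero_dvd this)
  have : Finite (A ⧸ N) := Nat.finite_of_card_ne_zero hNi
  let π := QuotientAddGroup.mk' N
  have hπ : Function.Surjective π := QuotientAddGroup.mk'_surjective N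
  have hπk : π.ker = N := QuotientAddGroup.ker_mk' N
  have hmem : ∀ x y, π x = π y ↔ x - y ∈ N := fun x y => by
    rw [← sub_eq_zero, ← map_sub]
    exact QuotientAddGroup.eq_zero_iff _
  set μ := pm (A ⧸ N) p with hμ
  have hπμ : ∀ x, μ (π x) = π (pm A p x) := fun x => (map_nsmul π p x).symm
  have hK : μ.ker.comap π = M' := by
    ext x
    rw [AddSubgroup.mem_comap, AddMonoidHom.mem_ker, hπμ, ← map_zero π, hmem, sub_zero]
    constructor
    · intro h
      obtain ⟨y, ⟨z, hz, rfl⟩, s, hs, hx⟩ := AddSubgroup.mem_sup.1 h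
      have : x - z ∈ M' := hPM (by
        change p • (x - z) ∈ P
        have hx' : p • z + s = p • x := hx
        rw [smul_sub, ← hx', add_sub_cancel_left]
        exact hs)
      simpa using M'.add_mem this hz
    · intro h
      exact AddSubgroup.mem_sup_left ⟨x, h, rfl⟩
  have hR : μ.range.comap π = P ⊔ (pm A p).range := by
    ext x
    constructor
    · rintro ⟨q, hq⟩
      obtain ⟨y, rfl⟩ := hπ q
      rw [hπμ, hmem] at hq
      have h1 : N ≤ P ⊔ (pm A p).range := by
        refine sup_le ?_ le_sup_left
        rintro _ ⟨z, -, rfl⟩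
        exact AddSubgroup.mem_sup_right ⟨z, rfl⟩
      have h2 := (P ⊔ (pm A p).range).sub_mem
        (AddSubgroup.mem_sup_right (S := P) ⟨y, rfl⟩ : pm A p y ∈ P ⊔ (pm A p).range) (h1 hq)
      simpa using h2
    · intro h
      obtain ⟨s, hs, _, ⟨z, rfl⟩, rfl⟩ := AddSubgroup.mem_sup.1 h
      refine ⟨π z, ?_⟩
      rw [hπμ, hmem]
      simpa using N.neg_mem (hPN hs)
  have ha' : μ.range.index = p ^ a := by
    rw [← AddSubgroup.index_comap_of_surjective _ hπ, hR, ha]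
  have hm'' : (μ.ker ⊔ μ.range).index = p ^ m' := by
    rw [← AddSubgroup.index_comap_of_surjective _ hπ, ← AddSubgroup.comap_sup_eq _ _ _ hπ, hK, hR,
      ← sup_assoc, sup_eq_left.2 hPM', hm']
  rw [Kc, ← count_Q hp ha' hm'' (a - m)]
  congr 1
  have hcond : ∀ U : AddSubgroup (A ⧸ N), (P ≤ U.comap π ∧ (U.comap π).comap (pm A p) = M' ∧
      (U.comap π ⊔ (pm A p).range).index = p ^ m) ↔
      (U ⊓ μ.range = ⊥ ∧ Nat.card U = p ^ (a - m)) := by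
    intro U
    have c1 : P ≤ U.comap π := by
      intro x hx
      have : π x = 0 := (QuotientAddGroup.eq_zero_iff x).2 (hPN hx)
      rw [AddSubgroup.mem_comap, this]; exact U.zero_mem
    have c2 : (U.comap π).comap (pm A p) = M' ↔ U ⊓ μ.range = ⊥ := by
      have e : (U.comap π).comap (pm A p) = (U.comap μ).comap π := by
        ext x
        simp only [AddSubgroup.mem_comap, hπμ]
      have e2 : (U.comap μ).comap π = M' ↔ U.comap μ = μ.ker :=
        ⟨fun h => AddSubgroup.comap_injective hπ (h.trans hK.symm), fun h => by rw [h]; exact hK⟩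
      rw [e, e2]
      constructor
      · intro h
        rw [eq_bot_iff]
        rintro u ⟨hu, ⟨y, rfl⟩⟩
        have : y ∈ U.comap μ := hu
        rw [h] at this
        exact this
      · intro h
        ext y
        rw [AddSubgroup.mem_comap, AddMonoidHom.mem_ker]
        constructor
        · intro hy
          have : μ y ∈ U ⊓ μ.range := ⟨hy, ⟨y, rfl⟩⟩
          rw [h] at this
          exact this
        · intro hy
          rw [hy]; exact U.zero_mem
    have c3 : (U.comap π ⊔ (pm A p).range).index = (U ⊔ μ.range).index := by
      rw [← AddSubgroup.index_comap_of_surjective _ hπ, ← AddSubgroup.comap_sup_eq _ _ _ hπ, hR,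
        ← sup_assoc, sup_eq_left.2 c1]
    rw [c2, c3]
    refine ⟨fun h => ⟨h.2.1, ?_⟩, fun h => ⟨c1, h.1, ?_⟩⟩
    all_goals
      have h1 : U ⊓ μ.range = ⊥ := by tauto
      have h2 := card_inf_mul_sup U μ.range
      rw [h1, AddSubgroup.card_bot, one_mul] at h2
      have h3 := AddSubgroup.index_mul_card (U ⊔ μ.range)
      have h4 := AddSubgroup.index_mul_card μ.range
      rw [h2, ← h4, ha', ← mul_assoc] at h3
      have h5 := Nat.eq_of_mul_eq_mul_right Nat.card_pos h3
    · rw [h.2.2, ← Nat.pow_sub_mul_pow p hma, mul_comm] at h5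
      exact Nat.eq_of_mul_eq_mul_right (pow_pos hp.pos m) h5
    · rw [h.2, ← Nat.pow_sub_mul_pow p hma, mul_comm] at h5
      exact Nat.eq_of_mul_eq_mul_left (pow_pos hp.pos _) h5
  symm
  refine Nat.card_congr
    { toFun := fun U => ⟨U.1.comap π, (hcond U.1).2 U.2⟩
      invFun := fun M => ⟨M.1.map π, ?_⟩
      left_inv := ?_
      right_inv := ?_ }
  all_goals
    have key : ∀ M : {M : AddSubgroup A // P ≤ M ∧ M.comap (pm A p) = M' ∧
      (M ⊔ (pm A p).range).index = p ^ m}, (M.1.map π).comap π = M.1 := by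
      intro M
      rw [AddSubgroup.comap_map_eq, hπk, sup_eq_left]
      refine sup_le ?_ M.2.1
      rintro _ ⟨z, hz, rfl⟩
      rw [← M.2.2.1] at hz
      exact hz
  · rw [← hcond, key]; exact M.2
  · intro U
    exact Subtype.ext (AddSubgroup.map_comap_eq_self_of_surjective hπ _)
  · intro M
    exact Subtype.ext (key M)

end

end HeisZeta


namespace HeisZeta

open Finset

set_option linter.unusedSectionVars false

/-- Prime decomposition data. -/
structure Dec {R : Type*} [CommRing R] {r : ℕ} (f : Fin r → ℕ) (p : ℕ) (𝔓 : Fin r → Ideal R) :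
    Prop where
  hp : p.Prime
  inj : Function.Injective 𝔓
  prime : ∀ i, (𝔓 i).IsPrime
  card : ∀ i, Nat.card (R ⧸ 𝔓 i) = p ^ f i
  span : Ideal.span {(p : R)} = ∏ i, 𝔓 i
  ne : (p : R) ≠ 0

section
variable {R : Type*} [CommRing R] [IsDedekindDomain R] {r : ℕ} {f : Fin r → ℕ}
  {p : ℕ} {𝔓 : Fin r → Ideal R}

/-- `∏ 𝔓_i ^ n_i` -/
def PP (𝔓 : Fin r → Ideal R) (n : Fin r → ℕ) : Ideal R := ∏ i, 𝔓 i ^ n i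

lemma Dec.ne_bot (D : Dec f p 𝔓) (i) : 𝔓 i ≠ ⊥ := by
  intro h
  have : Ideal.span {(p : R)} = ⊥ := by
    rw [D.span]; exact Finset.prod_eq_zero (mem_univ i) h
  exact D.ne (Ideal.span_singleton_eq_bot.1 this)

lemma Dec.pr (D : Dec f p 𝔓) (i) : Prime (𝔓 i) :=
  (Ideal.prime_iff_isPrime (D.ne_bot i)).2 (D.prime i)

lemma Dec.v (D : Dec f p 𝔓) (i j) : emultiplicity (𝔓 i) (𝔓 j) = if i = j then 1 else 0 := by
  split_ifs with h
  · subst h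
    have := (FiniteMultiplicity.of_prime_left (D.pr i) (D.ne_bot i)).emultiplicity_self
    exact this
  · rw [emultiplicity_eq_zero]
    intro hd
    have hm : (𝔓 j).IsMaximal := (D.prime j).isMaximal (D.ne_bot j)
    have := hm.eq_of_le (D.prime i).ne_top (Ideal.dvd_iff_le.1 hd)
    exact h (D.inj this.symm)

lemma Dec.vPP (D : Dec f p 𝔓) (n : Fin r → ℕ) (i) : emultiplicity (𝔓 i) (PP 𝔓 n) = n i := by
  rw [PP, Finset.emultiplicity_prod (D.pr i)]
  simp only [emultiplicity_pow (D.pr i), D.v]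
  simp

lemma Dec.PP_dvd (D : Dec f p 𝔓) (n : Fin r → ℕ) (I : Ideal R) :
    PP 𝔓 n ∣ I ↔ ∀ i, (n i : ℕ∞) ≤ emultiplicity (𝔓 i) I := by
  simp only [← pow_dvd_iff_le_emultiplicity]
  constructor
  · intro h i
    exact dvd_trans (Finset.dvd_prod_of_mem (fun j => 𝔓 j ^ n j) (mem_univ i)) h
  · intro h
    refine Finset.prod_dvd_of_coprime ?_ fun i _ => h i
    intro i _ j _ hij
    apply IsCoprime.pow
    have hi : (𝔓 i).IsMaximal := (D.prime i).isMaximal (D.ne_bot i)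
    have hj : (𝔓 j).IsMaximal := (D.prime j).isMaximal (D.ne_bot j)
    rw [Ideal.isCoprime_iff_sup_eq]
    exact hi.coprime_of_ne hj (fun h => hij (D.inj h))

lemma Dec.PP_le (D : Dec f p 𝔓) (n n' : Fin r → ℕ) : PP 𝔓 n ≤ PP 𝔓 n' ↔ n' ≤ n := by
  rw [← Ideal.dvd_iff_le, D.PP_dvd]
  simp only [D.vPP, Nat.cast_le]
  rfl

lemma Dec.PP_ne (D : Dec f p 𝔓) (n : Fin r → ℕ) : PP 𝔓 n ≠ ⊥ :=
  Finset.prod_ne_zero_iff.2 fun i _ => pow_ne_zero _ (D.ne_bot i)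

lemma Dec.of_dvd (D : Dec f p 𝔓) {n : Fin r → ℕ} {I : Ideal R} (h : I ∣ PP 𝔓 n) :
    ∃ μ, I = PP 𝔓 μ := by
  have hle : ∀ i, emultiplicity (𝔓 i) I ≤ n i := fun i => by
    rw [← D.vPP n i]; exact emultiplicity_le_emultiplicity_of_dvd_right h
  have hex : ∀ i, ∃ k : ℕ, emultiplicity (𝔓 i) I = k := fun i => by
    obtain ⟨k, hk⟩ := ENat.ne_top_iff_exists.1 (ne_top_of_le_ne_top (ENat.natCast_ne_top _) (hle i))
    exact ⟨k, hk.symm⟩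
  choose μ hμ using hex
  obtain ⟨J, hJ⟩ := (D.PP_dvd μ I).2 fun i => (hμ i).ge
  refine ⟨μ, ?_⟩
  by_cases hJt : J = ⊤
  · rw [hJ, hJt, Ideal.mul_top]
  · exfalso
    obtain ⟨Q, hQ, hJQ⟩ := Ideal.exists_le_maximal J hJt
    have hQJ : Q ∣ J := Ideal.dvd_iff_le.2 hJQ
    have hQ0 : Q ≠ ⊥ := by
      rintro rfl
      have : J = ⊥ := le_bot_iff.1 hJQ
      rw [this, Ideal.mul_bot] at hJ
      rw [hJ] at h
      exact D.PP_ne n (zero_dvd_iff.1 h)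
    have hQp : Prime Q := (Ideal.prime_iff_isPrime hQ0).2 hQ.isPrime
    have hJI : J ∣ I := ⟨_, by rw [hJ, mul_comm]⟩
    obtain ⟨i, -, hi⟩ := hQp.exists_mem_finset_dvd ((hQJ.trans hJI).trans h)
    have hi' : Q ∣ 𝔓 i := hQp.dvd_of_dvd_pow hi
    have hQi : 𝔓 i = Q := ((D.prime i).isMaximal (D.ne_bot i)).eq_of_le hQ.ne_top
      (Ideal.dvd_iff_le.1 hi')
    have h1 : 𝔓 i ^ (μ i + 1) ∣ I := by
      rw [hJ, pow_succ]
      exact mul_dvd_mul (Finset.dvd_prod_of_mem (fun i => 𝔓 i ^ μ i) (mem_univ i)) (hQi ▸ hQJ)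
    have h2 := le_emultiplicity_of_pow_dvd h1
    rw [hμ i] at h2
    have h3 : μ i + 1 ≤ μ i := by exact_mod_cast h2
    omega

lemma Dec.span_eq (D : Dec f p 𝔓) : Ideal.span {(p : R)} = PP 𝔓 1 := by
  rw [D.span, PP]; simp

lemma Dec.span_pow_eq (D : Dec f p 𝔓) (k : ℕ) :
    Ideal.span {(p : R) ^ k} = PP 𝔓 (fun _ => k) := by
  rw [← Ideal.span_singleton_pow, D.span, PP, Finset.prod_pow]

lemma Dec.mul_mem (D : Dec f p 𝔓) (n : Fin r → ℕ) (x : R) :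
    (p : R) * x ∈ PP 𝔓 n ↔ x ∈ PP 𝔓 (n - 1) := by
  rw [← Ideal.span_singleton_le_iff_mem, ← Ideal.span_singleton_le_iff_mem, ← Ideal.dvd_iff_le,
    ← Ideal.dvd_iff_le, ← Ideal.span_singleton_mul_span_singleton, D.PP_dvd, D.PP_dvd]
  refine forall_congr' fun i => ?_
  rw [emultiplicity_mul (D.pr i), D.span_eq, D.vPP]
  cases emultiplicity (𝔓 i) (Ideal.span {x}) with
  | top => simp
  | coe k =>
    simp only [Pi.one_apply, Pi.sub_apply]
    norm_cast
    omega

lemma Dec.sup (D : Dec f p 𝔓) (n : Fin r → ℕ) :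
    PP 𝔓 n ⊔ Ideal.span {(p : R)} = PP 𝔓 (n ⊓ 1) := by
  rw [D.span_eq]
  apply le_antisymm
  · exact sup_le ((D.PP_le _ _).2 inf_le_left) ((D.PP_le _ _).2 inf_le_right)
  · obtain ⟨μ, hμ⟩ := D.of_dvd (n := n) (I := PP 𝔓 n ⊔ PP 𝔓 1) (Ideal.dvd_iff_le.2 le_sup_left)
    have h1 : PP 𝔓 n ≤ PP 𝔓 μ := hμ ▸ le_sup_left
    have h2 : PP 𝔓 1 ≤ PP 𝔓 μ := hμ ▸ le_sup_right
    rw [hμ, D.PP_le]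
    exact le_inf ((D.PP_le _ _).1 h1) ((D.PP_le _ _).1 h2)

/-- the underlying additive subgroup -/
def PS (𝔓 : Fin r → Ideal R) (n : Fin r → ℕ) : AddSubgroup R := (PP 𝔓 n).toAddSubgroup

lemma mem_PS {n : Fin r → ℕ} {x : R} : x ∈ PS 𝔓 n ↔ x ∈ PP 𝔓 n := Iff.rfl

/-- `n · f` -/
def dot (n f : Fin r → ℕ) : ℕ := ∑ i, n i * f i

lemma Dec.PS_le (D : Dec f p 𝔓) (n n' : Fin r → ℕ) : PS 𝔓 n ≤ PS 𝔓 n' ↔ n' ≤ n :=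
  D.PP_le n n'

lemma Dec.PS_index [Module.Free ℤ R] [Module.Finite ℤ R] [Infinite R] (D : Dec f p 𝔓) (n : Fin r → ℕ) :
    (PS 𝔓 n).index = p ^ dot n f := by
  have h1 : (PS 𝔓 n).index = Ideal.absNorm (PP 𝔓 n) := rfl
  have h2 : ∀ i, Ideal.absNorm (𝔓 i) = p ^ f i := fun i => D.card i
  rw [h1, PP, map_prod]
  simp only [map_pow, h2]
  rw [dot, ← Finset.prod_pow_eq_pow_sum]
  exact Finset.prod_congr rfl fun i _ => by rw [← pow_mul, mul_comm]

lemma Dec.PS_comap (D : Dec f p 𝔓) (n : Fin r → ℕ) :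
    (PS 𝔓 n).comap (pm R p) = PS 𝔓 (n - 1) := by
  ext x
  rw [AddSubgroup.mem_comap, mem_PS, mem_PS, ← D.mul_mem n x]
  simp [pm]

lemma pm_range : (pm R p).range = (Ideal.span {(p : R)}).toAddSubgroup := by
  ext x
  change _ ↔ x ∈ Ideal.span {(p : R)}
  rw [Ideal.mem_span_singleton']
  constructor
  · rintro ⟨y, rfl⟩
    exact ⟨y, by simp [pm, mul_comm]⟩
  · rintro ⟨y, rfl⟩
    exact ⟨y, by simp [pm, mul_comm]⟩

/-- support -/
def supp (n : Fin r → ℕ) : Finset (Fin r) := univ.filter fun i => n i ≠ 0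

lemma Dec.PS_sup (D : Dec f p 𝔓) (n : Fin r → ℕ) : PS 𝔓 n ⊔ (pm R p).range = PS 𝔓 (n ⊓ 1) := by
  rw [pm_range, PS, PS, ← D.sup, Submodule.sup_toAddSubgroup]

lemma Dec.PS_sup_index [Module.Free ℤ R] [Module.Finite ℤ R] [Infinite R] (D : Dec f p 𝔓)
    (n : Fin r → ℕ) : (PS 𝔓 n ⊔ (pm R p).range).index = p ^ fS f (supp n) := by
  rw [D.PS_sup, D.PS_index, dot, fS, supp, Finset.sum_filter]
  congr 1
  refine Finset.sum_congr rfl fun i _ => ?_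
  by_cases h : n i = 0
  · simp [h]
  · have : (n ⊓ 1) i = 1 := by
      simp only [Pi.inf_apply, Pi.one_apply]; omega
    simp [h, this]

lemma Dec.core [Module.Free ℤ R] [Module.Finite ℤ R] [Infinite R] (D : Dec f p 𝔓)
    (M : AddSubgroup R) {k : ℕ} (hM : M.index = p ^ k) :
    ∃ ν : Fin r → ℕ, (∀ n, PS 𝔓 n ≤ M ↔ ν ≤ n) ∧ (coreSq M).index = p ^ (2 * dot ν f) := by
  have h1 : PP 𝔓 (fun _ => k) ≤ HeisZeta.core M := by
    rw [← D.span_pow_eq, Ideal.span_singleton_le_iff_mem, mem_core]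
    intro t
    have := smul_mem_of_index M t
    rw [hM] at this
    simpa [mul_comm] using this
  obtain ⟨ν, hν⟩ := D.of_dvd (Ideal.dvd_iff_le.2 h1)
  refine ⟨ν, fun n => ?_, ?_⟩
  · rw [PS, ← le_core, hν, D.PP_le]
  · have : (HeisZeta.core M).toAddSubgroup.index = p ^ dot ν f := by
      rw [hν]; exact D.PS_index ν
    rw [coreSq, AddSubgroup.index_prod, this, ← pow_add, two_mul]

end

end HeisZeta


namespace HeisZeta

open Finset
open scoped PowerSeries.WithPiTopology

set_option linter.unusedSectionVars false

/-- partial sums along a statistic -/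
noncomputable def GG {Ω β : Type*} (wt : Ω → PowerSeries ℚ) (stat : Ω → β) (s : β) : PowerSeries ℚ :=
  ∑' a : {a // stat a = s}, wt a

lemma GG_hasSum {Ω β : Type*} {wt : Ω → PowerSeries ℚ} (h : LF wt) (stat : Ω → β) (s : β) :
    HasSum (fun a : {a // stat a = s} => wt a) (GG wt stat s) :=
  (LF.comp_injective h Subtype.val_injective).summable.hasSum

lemma hasSum_of_eq {α : Type*} {u v : α → PowerSeries ℚ} {s : PowerSeries ℚ} (h : HasSum u s)
    (e : ∀ a, v a = u a) : HasSum v s := by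
  rwa [funext e]

lemma hasSum_stat {Ω β : Type*} [DecidableEq β] {wt : Ω → PowerSeries ℚ} (h : LF wt)
    (stat : Ω → β) (F : Finset β) (c : β → PowerSeries ℚ) (v : Ω → PowerSeries ℚ)
    (h0 : ∀ b, stat b ∉ F → v b = 0) (h1 : ∀ b, stat b ∈ F → v b = c (stat b) * wt b) :
    HasSum v (∑ s ∈ F, c s * GG wt stat s) := by
  have h2 : ∀ s ∈ F, HasSum (fun b => if stat b = s then c s * wt b else 0)
      (c s * GG wt stat s) := by
    intro s _
    have h3 : HasSum ((fun b => c s * wt b) ∘ (Subtype.val : {a | stat a = s} → Ω))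
        (c s * GG wt stat s) := (GG_hasSum h stat s).mul_left (c s)
    rw [hasSum_subtype_iff_indicator] at h3
    convert h3 using 1
    ext1 b
    classical
    rw [Set.indicator_apply]
    congr
  have h4 := hasSum_sum h2
  convert h4 using 1
  ext1 b
  rw [Finset.sum_ite_eq F (stat b) (fun s => c s * wt b)]
  split_ifs with hb
  · exact h1 b hb
  · exact h0 b hb

lemma geo_one {k : ℕ} (hk : 0 < k) : ∃ g : PowerSeries ℚ,
    HasSum (fun n : ℕ => (PowerSeries.X : PowerSeries ℚ) ^ (k * n)) g ∧
      g * (1 - PowerSeries.X ^ k) = 1 := by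
  have h0 : PowerSeries.constantCoeff ((PowerSeries.X : PowerSeries ℚ) ^ k) = 0 := by
    simp [hk.ne']
  have hs : Summable fun n : ℕ => ((PowerSeries.X : PowerSeries ℚ) ^ k) ^ n :=
    PowerSeries.WithPiTopology.summable_pow_of_constantCoeff_eq_zero h0
  refine ⟨∑' n : ℕ, ((PowerSeries.X : PowerSeries ℚ) ^ k) ^ n, ?_, ?_⟩
  · simpa only [pow_mul] using hs.hasSum
  · exact PowerSeries.WithPiTopology.tsum_pow_mul_one_sub_of_constantCoeff_eq_zero h0

lemma dot_mem_le {r : ℕ} {f : Fin r → ℕ} (hf : ∀ i, 0 < f i) (n : Fin r → ℕ) (i) :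
    n i ≤ dot n f :=
  (Nat.le_mul_of_pos_right _ (hf i)).trans
    (Finset.single_le_sum (f := fun i => n i * f i) (fun _ _ => Nat.zero_le _) (mem_univ i))

lemma LF_dot {r : ℕ} {f : Fin r → ℕ} (hf : ∀ i, 0 < f i) :
    LF (fun l : Fin r → ℕ => (PowerSeries.X : PowerSeries ℚ) ^ (2 * dot l f)) := by
  intro N
  refine (Set.finite_Iic (fun _ : Fin r => N)).subset ?_
  intro l hl i
  simp only [Set.mem_ofPred_eq, PowerSeries.coeff_X_pow, ne_eq, ite_eq_right_iff, not_forall] at hl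
  have := dot_mem_le hf l i
  have h2 := hl.1
  simp only
  omega

lemma geo {r : ℕ} (f : Fin r → ℕ) (hf : ∀ i, 0 < f i) : ∃ g : PowerSeries ℚ,
    HasSum (fun l : Fin r → ℕ => (PowerSeries.X : PowerSeries ℚ) ^ (2 * dot l f)) g ∧
      (∏ i, (1 - PowerSeries.X ^ (2 * f i))) * g = 1 := by
  induction r with
  | zero =>
    refine ⟨1, ?_, by simp⟩
    simp [dot]
  | succ r ih =>
    obtain ⟨g, hg, hg1⟩ := ih (fun i => f i.succ) (fun i => hf _)
    obtain ⟨g0, hg0, hg01⟩ := geo_one (k := 2 * f 0) (by have := hf 0; omega)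
    refine ⟨g0 * g, ?_, ?_⟩
    · have hw := LF_dot hf
      have h1 := hw.fiberwise (fun l => Fin.tail l)
        (v := fun l' => g0 * (PowerSeries.X : PowerSeries ℚ) ^ (2 * dot l' (fun i => f i.succ))) (by
          intro l'
          let e : ℕ ≃ {l : Fin (r + 1) → ℕ // Fin.tail l = l'} :=
            { toFun := fun n => ⟨Fin.cons n l', Fin.tail_cons _ _⟩
              invFun := fun l => l.1 0
              left_inv := fun n => rfl
              right_inv := by
                rintro ⟨l, rfl⟩
                exact Subtype.ext (Fin.cons_self_tail l) }
          rw [← e.hasSum_iff]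
          refine hasSum_of_eq
            (hg0.mul_right ((PowerSeries.X : PowerSeries ℚ) ^ (2 * dot l' (fun i => f i.succ))))
              fun n => ?_
          change (PowerSeries.X : PowerSeries ℚ) ^ (2 * dot (Fin.cons n l' : Fin (r + 1) → ℕ) f) = _
          simp only [dot, Fin.sum_univ_succ, Fin.cons_zero, Fin.cons_succ]
          rw [← pow_add]
          congr 1
          ring)
      have h2 := (hg.mul_left g0).unique h1
      rw [h2]
      exact hw.summable.hasSum
    · rw [Fin.prod_univ_succ]
      linear_combination ((∏ i : Fin r, (1 - (PowerSeries.X : PowerSeries ℚ) ^ (2 * f i.succ))) * g) * hg01 + hg1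

end HeisZeta


namespace HeisZeta

open Finset
open scoped PowerSeries.WithPiTopology

set_option linter.unusedSectionVars false

section
variable {R : Type*} [CommRing R] [IsDedekindDomain R] [Module.Free ℤ R] [Module.Finite ℤ R]
  [Infinite R] {r : ℕ} {f : Fin r → ℕ} {p : ℕ} {𝔓 : Fin r → Ideal R}

/-- Pairs `(n, M)` with `𝔓^n ≤ M`. -/
def Om (𝔓 : Fin r → Ideal R) : Type _ :=
  {a : (Fin r → ℕ) × AddSubgroup R // PS 𝔓 a.1 ≤ a.2}

/-- log of the index -/
noncomputable def lg (p : ℕ) (M : AddSubgroup R) : ℕ := Nat.log p M.index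

lemma lg_of {p : ℕ} (hp : p.Prime) {M : AddSubgroup R} {k : ℕ} (h : M.index = p ^ k) :
    lg p M = k := by
  rw [lg, h, Nat.log_pow hp.one_lt]

lemma Dec.index_of_le (D : Dec f p 𝔓) {n : Fin r → ℕ} {M : AddSubgroup R} (h : PS 𝔓 n ≤ M) :
    M.index = p ^ lg p M ∧ (M ⊔ (pm R p).range).index = p ^ lg p (M ⊔ (pm R p).range) := by
  have h1 := AddSubgroup.index_dvd_of_le h
  have h2 := AddSubgroup.index_dvd_of_le (h.trans (le_sup_left : M ≤ M ⊔ (pm R p).range))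
  rw [D.PS_index] at h1 h2
  obtain ⟨k, -, hk⟩ := (Nat.dvd_prime_pow D.hp).1 h1
  obtain ⟨l, -, hl⟩ := (Nat.dvd_prime_pow D.hp).1 h2
  rw [lg_of D.hp hk, lg_of D.hp hl]
  exact ⟨hk, hl⟩

/-- weight -/
noncomputable def wt (f : Fin r → ℕ) (p : ℕ) (a : Om 𝔓) : PowerSeries ℚ :=
  PowerSeries.X ^ (2 * dot a.1.1 f) *
    (PowerSeries.C (p : ℚ) ^ (2 * Module.finrank ℤ R) * PowerSeries.X) ^ lg p a.1.2

/-- statistic -/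
noncomputable def stat (p : ℕ) (a : Om 𝔓) : Finset (Fin r) × ℕ := (supp a.1.1, lg p (a.1.2 ⊔ (pm R p).range))

lemma Dec.LF_wt (D : Dec f p 𝔓) (hf : ∀ i, 0 < f i) : LF (wt f p : Om 𝔓 → PowerSeries ℚ) := by
  intro N
  have hfin : (Set.Iic (fun _ : Fin r => N) ×ˢ
      ⋃ k ∈ Set.Iic N, {M : AddSubgroup R | M.index = p ^ k}).Finite :=
    (Set.finite_Iic _).prod ((Set.finite_Iic N).biUnion fun k _ =>
      finite_index_eq _ (pow_pos D.hp.pos k).ne')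
  refine (hfin.preimage Subtype.val_injective.injOn).subset ?_
  rintro ⟨⟨n, M⟩, h⟩ ha
  have h1 : PowerSeries.coeff N (PowerSeries.X ^ (2 * dot n f) *
    (PowerSeries.C (p : ℚ) ^ (2 * Module.finrank ℤ R) * PowerSeries.X) ^ lg p M) ≠ 0 := ha
  have h2 : 2 * dot n f + lg p M ≤ N := by
    by_contra hcon
    apply h1
    rw [mul_pow, ← pow_mul, ← map_pow, mul_left_comm, ← pow_add, PowerSeries.coeff_C_mul,
      PowerSeries.coeff_X_pow, if_neg (by omega), mul_zero]
  refine ⟨fun i => ?_, ?_⟩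
  · have := dot_mem_le hf n i
    simp only
    omega
  · simp only [Set.mem_iUnion]
    exact ⟨lg p M, by simp only [Set.mem_Iic]; omega, (D.index_of_le h).1⟩

/-- The generating functions. -/
noncomputable def GS (f : Fin r → ℕ) (p : ℕ) (𝔓 : Fin r → Ideal R) (S : Finset (Fin r)) (m : ℕ) :
    PowerSeries ℚ := GG (wt f p : Om 𝔓 → PowerSeries ℚ) (stat p) (S, m)

lemma fS_mono {S S' : Finset (Fin r)} (h : S ⊆ S') : fS f S ≤ fS f S' :=
  Finset.sum_le_sum_of_subset h

lemma Dec.stat_le (D : Dec f p 𝔓) (a : Om 𝔓) : (stat p a).2 ≤ fS f (stat p a).1 := by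
  obtain ⟨⟨n, M⟩, h⟩ := a
  have h1 := AddSubgroup.index_dvd_of_le (sup_le_sup_right h (pm R p).range)
  simp only at h1 h
  rw [D.PS_sup_index, (D.index_of_le h).2] at h1
  exact (Nat.pow_dvd_pow_iff_le_right D.hp.one_lt).1 h1

lemma Dec.total (D : Dec f p 𝔓) (hf : ∀ i, 0 < f i) {d : ℕ} (hd : d = ∑ i, f i) :
    HasSum (wt f p : Om 𝔓 → PowerSeries ℚ) (Ftot d (GS f p 𝔓)) := by
  have h := hasSum_stat (D.LF_wt hf) (stat p) (univ ×ˢ range (d + 1)) (fun _ => 1) (wt f p)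
    (fun b hb => by
      exfalso
      apply hb
      rw [mem_product]
      refine ⟨mem_univ _, ?_⟩
      rw [mem_range, Nat.lt_succ_iff, hd]
      exact (D.stat_le b).trans (fS_mono (subset_univ _))) (fun b _ => (one_mul _).symm)
  simp only [one_mul] at h
  rw [Finset.sum_product_right] at h
  exact h

lemma Dec.zeta (D : Dec f p 𝔓) (hf : ∀ i, 0 < f i) {d : ℕ} (hd : d = ∑ i, f i)
    (hrk : Module.finrank ℤ R = d) :
    (PowerSeries.mk fun i => (normalSubgroupCount (Heisenberg R) (p ^ i) : ℚ)) *
      ∏ i ∈ range (2 * d), (1 - PowerSeries.C (p : ℚ) ^ i * PowerSeries.X) =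
    (∏ i, (1 - PowerSeries.X ^ (2 * f i))) * Ftot d (GS f p 𝔓) := by
  have hw := D.LF_wt (𝔓 := 𝔓) hf
  have h1 := (zeta_hasSum (R := R) D.hp).mul_right
    (∏ i ∈ range (2 * d), (1 - PowerSeries.C (p : ℚ) ^ i * PowerSeries.X))
  have h2 := hw.fiberwise (fun a : Om 𝔓 => a.1.2)
    (v := GG (wt f p : Om 𝔓 → PowerSeries ℚ) (fun a : Om 𝔓 => a.1.2))
    (fun M => GG_hasSum hw _ M)
  rw [(D.total hf hd).tsum_eq] at h2
  have h3 := h2.mul_left (∏ i, (1 - PowerSeries.X ^ (2 * f i)))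
  refine h1.unique (hasSum_of_eq h3 fun M => ?_)
  by_cases hM : ∃ k, M.index = p ^ k
  · obtain ⟨k, hk⟩ := hM
    obtain ⟨ν, hν, he⟩ := D.core M hk
    obtain ⟨g, hg, hg1⟩ := geo f hf
    rw [← hrk, zeta_term D.hp M hk he, hrk]
    let e : (Fin r → ℕ) ≃ {a : Om 𝔓 // a.1.2 = M} :=
      { toFun := fun l => ⟨⟨(ν + l, M), (hν _).2 (le_add_of_nonneg_right zero_le)⟩, rfl⟩
        invFun := fun a => a.1.1.1 - ν
        left_inv := fun l => by simp
        right_inv := by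
          rintro ⟨⟨⟨n, M⟩, h⟩, rfl⟩
          apply Subtype.ext
          apply Subtype.ext
          have : ν ≤ n := (hν n).1 h
          simp [add_tsub_cancel_of_le this] }
    have h4 : HasSum (fun a : {a : Om 𝔓 // a.1.2 = M} => wt f p a.1)
        (((PowerSeries.C (p : ℚ) ^ (2 * d) * PowerSeries.X) ^ k *
          PowerSeries.X ^ (2 * dot ν f)) * g) := by
      rw [← e.hasSum_iff]
      refine hasSum_of_eq (hg.mul_left _) fun l => ?_
      change PowerSeries.X ^ (2 * dot (ν + l) f) *
        (PowerSeries.C (p : ℚ) ^ (2 * Module.finrank ℤ R) * PowerSeries.X) ^ lg p M = _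
      rw [lg_of D.hp hk, hrk]
      have : dot (ν + l) f = dot ν f + dot l f := by
        simp only [dot, Pi.add_apply, add_mul, sum_add_distrib]
      rw [this, mul_add, pow_add]
      ring
    rw [(GG_hasSum hw (fun a : Om 𝔓 => a.1.2) M).unique h4]
    linear_combination (-((PowerSeries.C (p : ℚ) ^ (2 * d) * PowerSeries.X) ^ k *
          PowerSeries.X ^ (2 * dot ν f))) * hg1
  · push Not at hM
    rw [cnt_fiber_zero D.hp _ M hM, zero_mul]
    have : IsEmpty {a : Om 𝔓 // a.1.2 = M} := by
      constructor
      rintro ⟨a, rfl⟩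
      exact hM _ (D.index_of_le a.2).1
    rw [GG, tsum_empty, mul_zero]

end

end HeisZeta


namespace HeisZeta

open Finset
open scoped PowerSeries.WithPiTopology

set_option linter.unusedSectionVars false

section
variable {R : Type*} [CommRing R] [IsDedekindDomain R] [Module.Free ℤ R] [Module.Finite ℤ R]
  [Infinite R] {r : ℕ} {f : Fin r → ℕ} {p : ℕ} {𝔓 : Fin r → Ideal R}

/-- The reduction map `(n, M) ↦ (n - 1, {x | p x ∈ M})`. -/
def Dec.red (D : Dec f p 𝔓) (a : Om 𝔓) : Om 𝔓 :=
  ⟨(a.1.1 - 1, a.1.2.comap (pm R p)), by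
    rw [← D.PS_comap]
    exact AddSubgroup.comap_mono a.2⟩

lemma Dec.wt_red (D : Dec f p 𝔓) (a : Om 𝔓) : wt f p a =
    PowerSeries.X ^ (2 * fS f (stat p a).1) *
      (PowerSeries.C (p : ℚ) ^ (2 * Module.finrank ℤ R) * PowerSeries.X) ^ (stat p a).2 *
      wt f p (D.red a) := by
  have h1 : dot a.1.1 f = fS f (supp a.1.1) + dot (a.1.1 - 1) f := by
    rw [dot, dot, fS, supp, sum_filter, ← sum_add_distrib]
    refine sum_congr rfl fun i _ => ?_
    simp only [Pi.sub_apply, Pi.one_apply]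
    rcases Nat.eq_zero_or_pos (a.1.1 i) with h | h
    · simp [h]
    · obtain ⟨k, hk⟩ : ∃ k, a.1.1 i = k + 1 := ⟨a.1.1 i - 1, by omega⟩
      simp [hk]; ring
  have h2 : lg p a.1.2 = lg p (a.1.2 ⊔ (pm R p).range) + lg p (a.1.2.comap (pm R p)) := by
    apply lg_of D.hp
    have h4 : (a.1.2.comap (pm R p)).index = p ^ lg p (a.1.2.comap (pm R p)) :=
      (D.index_of_le (D.red a).2).1
    rw [index_pm p, pow_add, ← (D.index_of_le a.2).2, ← h4]
  have h3 : wt f p (D.red a) = PowerSeries.X ^ (2 * dot (a.1.1 - 1) f) *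
    (PowerSeries.C (p : ℚ) ^ (2 * Module.finrank ℤ R) * PowerSeries.X) ^
      lg p (a.1.2.comap (pm R p)) := rfl
  rw [h3, wt, h1, h2, stat, mul_add, pow_add, pow_add]
  ring

lemma Dec.fiber (D : Dec f p 𝔓) (S : Finset (Fin r)) (m : ℕ) (hm : m ≤ fS f S) (b : Om 𝔓)
    (hb : supp b.1.1 ⊆ S) :
    (Nat.card {a : {a : Om 𝔓 // stat p a = (S, m)} // D.red a.1 = b} : ℤ) =
      Kc (p : ℤ) (fS f S) m (stat p b).2 := by
  obtain ⟨⟨n', M'⟩, h'⟩ := b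
  simp only at hb h'
  let n : Fin r → ℕ := fun i => if i ∈ S then n' i + 1 else 0
  have hn1 : n - 1 = n' := by
    ext i
    simp only [n, Pi.sub_apply, Pi.one_apply]
    split_ifs with h
    · simp
    · have : i ∉ supp n' := fun hi => h (hb hi)
      simp only [supp, mem_filter, mem_univ, true_and, not_not] at this
      simp [this]
  have hns : supp n = S := by
    ext i
    simp only [supp, mem_filter, mem_univ, true_and, n]
    split_ifs with h <;> simp [h]
  have huniq : ∀ l : Fin r → ℕ, supp l = S → l - 1 = n' → l = n := by
    rintro l hl rfl
    ext i
    have : i ∈ S ↔ l i ≠ 0 := by rw [← hl]; simp [supp]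
    simp only [n, Pi.sub_apply, Pi.one_apply]
    split_ifs with h
    · have := this.1 h
      omega
    · by_contra hc
      exact h (this.2 hc)
  have hidx := D.PS_sup_index n
  rw [hns] at hidx
  refine Eq.trans ?_ (fiber_count D.hp (PS 𝔓 n) M' (by rw [D.PS_index]; exact (pow_pos D.hp.pos _).ne')
    (by rw [D.PS_comap, hn1]; exact h') hidx (D.index_of_le h').2 hm)
  congr 1
  refine Nat.card_congr
    { toFun := fun a => ⟨a.1.1.1.2, ?_, ?_, ?_⟩
      invFun := fun M => ⟨⟨⟨(n, M.1), M.2.1⟩, ?_⟩, ?_⟩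
      left_inv := ?_
      right_inv := fun M => rfl }
  · obtain ⟨⟨⟨⟨l, M⟩, h1⟩, h2⟩, h3⟩ := a
    have hl : l = n := huniq l (congrArg Prod.fst h2) (congrArg (fun x : Om 𝔓 => x.1.1) h3)
    rw [← hl]
    exact h1
  · exact congrArg (fun x : Om 𝔓 => x.1.2) a.2
  · have := (D.index_of_le a.1.1.2).2
    have h2 : lg p (a.1.1.1.2 ⊔ (pm R p).range) = m := congrArg Prod.snd a.1.2
    rw [h2] at this
    exact this
  · exact Prod.ext hns (lg_of D.hp M.2.2.2)
  · apply Subtype.ext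
    exact Prod.ext hn1 M.2.2.1
  · rintro ⟨⟨⟨⟨l, M⟩, h1⟩, h2⟩, h3⟩
    have hl : l = n := huniq l (congrArg Prod.fst h2) (congrArg (fun x : Om 𝔓 => x.1.1) h3)
    subst hl
    rfl

lemma PS_zero : PS 𝔓 0 = ⊤ := by
  ext x
  have h : PP 𝔓 0 = ⊤ := by
    simp [PP, Ideal.one_eq_top]
  rw [mem_PS, h]
  simp

lemma supp_eq_empty {n : Fin r → ℕ} (h : supp n = ∅) : n = 0 := by
  ext i
  by_contra hc
  have : i ∈ supp n := by simpa [supp] using hc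
  rw [h] at this
  simp at this

lemma Dec.sys (D : Dec f p 𝔓) (hf : ∀ i, 0 < f i) {d : ℕ} (hrk : Module.finrank ℤ R = d) :
    Sys f d (PowerSeries.C (p : ℚ)) PowerSeries.X (GS f p 𝔓) where
  empty m := by
    have key : ∀ a : Om 𝔓, supp a.1.1 = ∅ → a.1 = (0, ⊤) := by
      rintro ⟨⟨n, M⟩, h⟩ hs
      have hn : n = 0 := supp_eq_empty hs
      subst hn
      rw [PS_zero, top_le_iff] at h
      exact Prod.ext rfl h
    have hl : lg p (⊤ : AddSubgroup R) = 0 := lg_of D.hp (by simp)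
    have hst : ∀ a : Om 𝔓, a.1 = (0, ⊤) → stat p a = (∅, 0) := by
      intro a ha
      rw [stat, ha]
      simp [supp, hl]
    split_ifs with hm
    · subst hm
      let a0 : Om 𝔓 := ⟨(0, ⊤), le_top⟩
      let : Unique {a : Om 𝔓 // stat p a = (∅, 0)} :=
        { default := ⟨a0, hst a0 rfl⟩
          uniq := fun a => Subtype.ext (Subtype.ext (key a.1 (congrArg Prod.fst a.2))) }
      have h1 : wt f p a0 = 1 := by
        simp [wt, a0, hl, dot]
      have h2 := hasSum_unique (fun a : {a : Om 𝔓 // stat p a = (∅, 0)} => wt f p a.1)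
      exact h2.tsum_eq.trans h1
    · have : IsEmpty {a : Om 𝔓 // stat p a = (∅, m)} := by
        constructor
        rintro ⟨a, ha⟩
        have := hst a (key a (congrArg Prod.fst ha))
        rw [ha] at this
        exact hm (congrArg Prod.snd this)
      rw [GS, GG, tsum_empty]
  zero S m hm := by
    have : IsEmpty {a : Om 𝔓 // stat p a = (S, m)} := by
      constructor
      rintro ⟨a, ha⟩
      have := D.stat_le a
      rw [ha] at this
      simp only at this
      omega
    rw [GS, GG, tsum_empty]
  step S _ m hm := by
    classical
    have hw := D.LF_wt (𝔓 := 𝔓) hf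
    set c : Finset (Fin r) × ℕ → PowerSeries ℚ := fun s =>
      PowerSeries.X ^ (2 * fS f S) * (PowerSeries.C (p : ℚ) ^ (2 * d) * PowerSeries.X) ^ m *
        Kc (PowerSeries.C (p : ℚ)) (fS f S) m s.2 with hc
    let v : Om 𝔓 → PowerSeries ℚ := fun b =>
      if (stat p b).1 ⊆ S then c (stat p b) * wt f p b else 0
    have hw' : LF (fun a : {a : Om 𝔓 // stat p a = (S, m)} => wt f p a.1) :=
      LF.comp_injective hw Subtype.val_injective
    have h1 : HasSum v (GS f p 𝔓 S m) := by
      refine hw'.fiberwise (fun a => D.red a.1) ?_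
      intro b
      by_cases hb : (stat p b).1 ⊆ S
      · have hcount := D.fiber S m hm b hb
        have hconst : ∀ a : {a : {a : Om 𝔓 // stat p a = (S, m)} // D.red a.1 = b},
            wt f p a.1.1 = PowerSeries.X ^ (2 * fS f S) *
              (PowerSeries.C (p : ℚ) ^ (2 * d) * PowerSeries.X) ^ m * wt f p b := by
          rintro ⟨⟨a, ha⟩, rfl⟩
          rw [D.wt_red a, ha, hrk]
        have hfin : Finite {a : {a : Om 𝔓 // stat p a = (S, m)} // D.red a.1 = b} := by
          have hT : (PowerSeries.C (p : ℚ)) ≠ 0 := by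
            rw [Ne, map_eq_zero_iff _ PowerSeries.C_injective]
            exact_mod_cast D.hp.ne_zero
          have hwne : ∀ e : Om 𝔓, wt f p e ≠ 0 := fun e =>
            mul_ne_zero (pow_ne_zero _ PowerSeries.X_ne_zero)
              (pow_ne_zero _ (mul_ne_zero (pow_ne_zero _ hT) PowerSeries.X_ne_zero))
          rcases isEmpty_or_nonempty
            {a : {a : Om 𝔓 // stat p a = (S, m)} // D.red a.1 = b} with he | ⟨⟨a0⟩⟩
          · infer_instance
          obtain ⟨N, hN⟩ : ∃ N, PowerSeries.coeff N (wt f p a0.1.1) ≠ 0 := by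
            by_contra! hcon
            exact hwne a0.1.1 (PowerSeries.ext fun N => by rw [hcon N, map_zero])
          have hs := (hw' N).to_subtype
          refine Finite.of_injective
            (fun a => (⟨a.1, ?_⟩ : {a : {a : Om 𝔓 // stat p a = (S, m)} |
              PowerSeries.coeff N (wt f p a.1) ≠ 0})) ?_
          · change PowerSeries.coeff N (wt f p a.1.1) ≠ 0
            rw [hconst a, ← hconst a0]
            exact hN
          · intro a a' h
            have h' : a.1 = a'.1 := congrArg (fun z => z.1) h
            exact Subtype.ext h'
        have := Fintype.ofFinite {a : {a : Om 𝔓 // stat p a = (S, m)} // D.red a.1 = b}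
        have h2 := hasSum_fintype
          (fun a : {a : {a : Om 𝔓 // stat p a = (S, m)} // D.red a.1 = b} => wt f p a.1.1)
        simp only [hconst, sum_const, card_univ] at h2
        refine hasSum_of_eq (s := v b) (u := fun _ => _) ?_ hconst
        convert h2 using 1
        have h3 := congrArg (Int.castRingHom (PowerSeries ℚ)) hcount
        rw [map_Kc, Nat.card_eq_fintype_card] at h3
        simp only [eq_intCast, Int.cast_natCast] at h3
        have h4 : PowerSeries.C (p : ℚ) = ((p : ℕ) : PowerSeries ℚ) := by simp
        simp only [v, if_pos hb, hc]
        rw [nsmul_eq_mul, h3, h4]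
        ring
      · have : IsEmpty {a : {a : Om 𝔓 // stat p a = (S, m)} // D.red a.1 = b} := by
          constructor
          rintro ⟨⟨a, ha⟩, rfl⟩
          apply hb
          have h5 : supp a.1.1 = S := congrArg Prod.fst ha
          intro i hi
          have h6 : i ∈ supp (a.1.1 - 1) := hi
          have h7 : i ∈ supp a.1.1 := by
            simp only [supp, mem_filter, mem_univ, true_and, Pi.sub_apply, Pi.one_apply] at h6 ⊢
            omega
          rw [h5] at h7
          exact h7
        simp only [v, if_neg hb]
        exact hasSum_empty
    have h2 := hasSum_stat hw (stat p) (S.powerset ×ˢ range (m + 1)) c v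
      (fun b hb => by
        simp only [v]
        split_ifs with h
        · have hm' : ¬ (stat p b).2 < m + 1 := fun hlt => hb (by
            rw [mem_product, mem_powerset, mem_range]; exact ⟨h, hlt⟩)
          rw [hc]
          simp only
          rw [Kc_eq_zero _ (by omega) ((D.stat_le b).trans (fS_mono h)), mul_zero, zero_mul]
        · rfl)
      (fun b hb => by
        rw [mem_product, mem_powerset] at hb
        simp only [v, if_pos hb.1])
    rw [h1.unique h2, sum_product_right, mul_sum]
    refine sum_congr rfl fun m' _ => ?_
    rw [mul_sum, mul_sum]
    refine sum_congr rfl fun S' _ => ?_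
    rw [hc, GS]
    ring

end

end HeisZeta


namespace HeisZeta

open Finset

abbrev Pol := MvPolynomial (Fin 2) ℚ
abbrev Frac := FractionRing Pol

noncomputable def XX : Frac := algebraMap Pol Frac (MvPolynomial.X 0)
noncomputable def YY : Frac := algebraMap Pol Frac (MvPolynomial.X 1)

lemma monomial_ne_one (a b : ℕ) (h : 0 < a + b) :
    (MvPolynomial.X 0 ^ a * MvPolynomial.X 1 ^ b : Pol) ≠ 1 := by
  intro h1
  have := congrArg (MvPolynomial.eval (fun _ : Fin 2 => (0 : ℚ))) h1
  simp only [map_mul, map_pow, MvPolynomial.eval_X, map_one] at this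
  rw [← pow_add, zero_pow (by omega)] at this
  exact zero_ne_one this

lemma XY_ne_one (a b : ℕ) (h : 0 < a + b) : XX ^ a * YY ^ b ≠ 1 := by
  intro h1
  apply monomial_ne_one a b h
  apply IsFractionRing.injective Pol Frac
  simpa [XX, YY] using h1

lemma XX_ne_zero : XX ≠ 0 := by
  rw [XX, Ne, map_eq_zero_iff _ (IsFractionRing.injective Pol Frac)]
  exact MvPolynomial.X_ne_zero _

lemma YY_ne_zero : YY ≠ 0 := by
  rw [YY, Ne, map_eq_zero_iff _ (IsFractionRing.injective Pol Frac)]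
  exact MvPolynomial.X_ne_zero _

/-- substitution as a ring hom -/
noncomputable def sub (x y : Frac) : Pol →+* Frac :=
  MvPolynomial.eval₂Hom ((algebraMap Pol Frac).comp MvPolynomial.C) ![x, y]

lemma sub_apply (x y : Frac) (P : Pol) : sub x y P = ratFunSubst P x y := rfl

lemma sub_self : sub XX YY = algebraMap Pol Frac := by
  apply MvPolynomial.ringHom_ext
  · intro q
    simp only [sub, MvPolynomial.coe_eval₂Hom, MvPolynomial.eval₂_C, RingHom.comp_apply]
  · intro i
    fin_cases i <;> simp [sub, XX, YY]

@[simp] lemma sub_X0 (x y : Frac) : sub x y (MvPolynomial.X 0) = x := by simp [sub]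
@[simp] lemma sub_X1 (x y : Frac) : sub x y (MvPolynomial.X 1) = y := by simp [sub]

noncomputable def evp (p : ℕ) : Pol →+* PowerSeries ℚ :=
  (Polynomial.coeToPowerSeries.ringHom).comp
    (MvPolynomial.aeval ![Polynomial.C (p : ℚ), Polynomial.X] : Pol →ₐ[ℚ] Polynomial ℚ).toRingHom

lemma evp_apply (p : ℕ) (P : Pol) : evp p P = ((evalAtPrime P p : Polynomial ℚ) : PowerSeries ℚ) :=
  rfl

@[simp] lemma evp_X0 (p : ℕ) : evp p (MvPolynomial.X 0) = PowerSeries.C (p : ℚ) := by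
  simp [evp]
@[simp] lemma evp_X1 (p : ℕ) : evp p (MvPolynomial.X 1) = PowerSeries.X := by
  simp [evp]

lemma evp_const (p : ℕ) (P : Pol) :
    PowerSeries.constantCoeff (evp p P) = (evalAtPrime P p).coeff 0 := by
  rw [evp_apply, ← PowerSeries.coeff_zero_eq_constantCoeff_apply, Polynomial.coeff_coe]

/-- The admissible denominators. -/
noncomputable def Den : Submonoid Pol where
  carrier := {Q | (∀ p : ℕ, p.Prime → PowerSeries.constantCoeff (evp p Q) ≠ 0) ∧
    sub XX⁻¹ YY⁻¹ Q ≠ 0}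
  one_mem' := by simp
  mul_mem' := by
    rintro a b ⟨h1, h2⟩ ⟨h3, h4⟩
    refine ⟨fun p hp => ?_, ?_⟩
    · rw [map_mul, map_mul]; exact mul_ne_zero (h1 p hp) (h3 p hp)
    · rw [map_mul]; exact mul_ne_zero h2 h4

lemma mem_Den (a b : ℕ) (hb : 0 < b) :
    (1 - MvPolynomial.X 0 ^ a * MvPolynomial.X 1 ^ b : Pol) ∈ Den := by
  refine ⟨fun p _ => ?_, ?_⟩
  · simp [hb.ne']
  · simp only [map_sub, map_one, map_mul, map_pow, sub_X0, sub_X1]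
    rw [sub_ne_zero, inv_pow, inv_pow, ← mul_inv, ne_comm, Ne, inv_eq_one]
    exact XY_ne_one a b (by omega)

lemma Den_ne_zero {Q : Pol} (h : Q ∈ Den) : Q ≠ 0 := by
  rintro rfl
  exact h.2 (map_zero _)

lemma prod_inv_aux (N : ℕ) : (∏ i ∈ range N, (1 - XX⁻¹ ^ i * YY⁻¹)) * (XX ^ (N.choose 2) * YY ^ N) =
    (-1) ^ N * ∏ i ∈ range N, (1 - XX ^ i * YY) := by
  have hX := XX_ne_zero
  have hY := YY_ne_zero
  induction N with
  | zero => simp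
  | succ N ih =>
    have : (N + 1).choose 2 = N.choose 2 + N := by
      rw [Nat.choose_succ_succ' N 1]; simp; ring
    rw [prod_range_succ, prod_range_succ, this, pow_add, pow_succ YY, pow_succ (-1)]
    calc _ = ((∏ i ∈ range N, (1 - XX⁻¹ ^ i * YY⁻¹)) * (XX ^ (N.choose 2) * YY ^ N)) *
          ((1 - XX⁻¹ ^ N * YY⁻¹) * (XX ^ N * YY)) := by ring
      _ = _ := by
        rw [ih]
        have : (1 - XX⁻¹ ^ N * YY⁻¹) * (XX ^ N * YY) = - (1 - XX ^ N * YY) := by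
          rw [inv_pow]; field_simp; ring
        rw [this]; ring

/-- Everything number theoretic that is needed. -/
theorem main_of_series (r : ℕ) (hr : 0 < r) (f : Fin r → ℕ) (hf : ∀ i, 0 < f i) (d : ℕ)
    (hd : d = ∑ i, f i) :
    ∃ P Q : Pol, Q ≠ 0 ∧
      (∀ p : ℕ, p.Prime → ∀ ζ : PowerSeries ℚ, ∀ G : Finset (Fin r) → ℕ → PowerSeries ℚ,
        Sys f d (PowerSeries.C (p : ℚ)) PowerSeries.X G →
        ζ * ∏ i ∈ range (2 * d), (1 - PowerSeries.C (p : ℚ) ^ i * PowerSeries.X) =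
          (∏ i, (1 - PowerSeries.X ^ (2 * f i))) * Ftot d G →
        (evalAtPrime Q p).coeff 0 ≠ 0 ∧
              ζ * ((evalAtPrime Q p : Polynomial ℚ) : PowerSeries ℚ)
                = ((evalAtPrime P p : Polynomial ℚ) : PowerSeries ℚ)) ∧
      ratFunSubst P XX⁻¹ YY⁻¹ / ratFunSubst Q XX⁻¹ YY⁻¹ =
         (-1) ^ (3 * d) * XX ^ ((3 * d).choose 2) * YY ^ (5 * d) *
           (ratFunSubst P XX YY / ratFunSubst Q XX YY) := by
  let A := Localization Den
  let x : A := algebraMap Pol A (MvPolynomial.X 0)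
  let y : A := algebraMap Pol A (MvPolynomial.X 1)
  have hunit : ∀ a b : ℕ, 0 < b → IsUnit (1 - x ^ a * y ^ b) := by
    intro a b hb
    have := IsLocalization.map_units A (⟨_, mem_Den a b hb⟩ : Den)
    simpa [x, y] using this
  obtain ⟨G, hG⟩ := Sys.exists (d := d) hf hunit
  let w : A := (∏ i, (1 - y ^ (2 * f i))) *
    (∏ i ∈ range (2 * d), Ring.inverse (1 - x ^ i * y)) * Ftot d G
  have hw : w * ∏ i ∈ range (2 * d), (1 - x ^ i * y) = (∏ i, (1 - y ^ (2 * f i))) * Ftot d G := by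
    have : (∏ i ∈ range (2 * d), Ring.inverse (1 - x ^ i * y)) *
        ∏ i ∈ range (2 * d), (1 - x ^ i * y) = 1 := by
      rw [← prod_mul_distrib]
      refine prod_eq_one fun i _ => ?_
      have := hunit i 1 one_pos
      rw [pow_one] at this
      exact Ring.inverse_mul_cancel _ this
    calc w * ∏ i ∈ range (2 * d), (1 - x ^ i * y) = (∏ i, (1 - y ^ (2 * f i))) *
      ((∏ i ∈ range (2 * d), Ring.inverse (1 - x ^ i * y)) *
        ∏ i ∈ range (2 * d), (1 - x ^ i * y)) * Ftot d G := by simp only [w]; ring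
      _ = _ := by rw [this, mul_one]
  have tr : ∀ {B : Type} [CommRing B] (φ : A →+* B), φ w * ∏ i ∈ range (2 * d), (1 - φ x ^ i * φ y) =
      (∏ i, (1 - φ y ^ (2 * f i))) * Ftot d (fun S m => φ (G S m)) := by
    intro B _ φ
    have := congrArg φ hw
    simpa [Ftot, map_mul, map_prod, map_sum] using this
  obtain ⟨⟨P, Q⟩, hPQ⟩ := IsLocalization.surj Den w
  simp only at hPQ
  refine ⟨P, Q, Den_ne_zero Q.2, ?_, ?_⟩
  · intro p hp ζ H hH hζ
    have hQ0 := Q.2.1 p hp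
    refine ⟨by rw [← evp_const]; exact hQ0, ?_⟩
    have hu : ∀ q : Den, IsUnit (evp p q) := fun q => by
      rw [PowerSeries.isUnit_iff_constantCoeff]
      exact (q.2.1 p hp).isUnit
    let φ : A →+* PowerSeries ℚ := IsLocalization.lift (M := Den) hu
    have hφ : ∀ q : Pol, φ (algebraMap Pol A q) = evp p q := fun q => IsLocalization.lift_eq hu q
    have hx : φ x = PowerSeries.C (p : ℚ) := by rw [hφ]; simp
    have hy : φ y = PowerSeries.X := by rw [hφ]; simp
    have hG' := hG.map φ
    rw [hx, hy] at hG'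
    have hne : ∀ a b : ℕ, 0 < b →
        (PowerSeries.C (p : ℚ)) ^ a * (PowerSeries.X : PowerSeries ℚ) ^ b ≠ 1 := by
      intro a b hb h
      have := congrArg PowerSeries.constantCoeff h
      simp [hb.ne'] at this
    have huniq := hH.unique hf hne hG'
    have hF : Ftot d H = Ftot d (fun S m => φ (G S m)) := by
      simp only [Ftot]
      exact sum_congr rfl fun m _ => sum_congr rfl fun S _ => huniq S m
    have t := tr φ
    rw [hx, hy, ← hF, ← hζ] at t
    have hζw : φ w = ζ := by
      refine mul_right_cancel₀ (prod_ne_zero_iff.2 fun i _ => ?_) t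
      have := hne i 1 one_pos
      rw [pow_one] at this
      exact sub_ne_zero.2 this.symm
    have := congrArg φ hPQ
    rw [map_mul, hφ, hφ, hζw] at this
    exact this
  · have hu1 : ∀ q : Den, IsUnit (sub XX YY q) := fun q => by
      rw [sub_self, isUnit_iff_ne_zero, Ne, map_eq_zero_iff _ (IsFractionRing.injective Pol Frac)]
      exact Den_ne_zero q.2
    have hu2 : ∀ q : Den, IsUnit (sub XX⁻¹ YY⁻¹ q) := fun q => q.2.2.isUnit
    let φ : A →+* Frac := IsLocalization.lift (M := Den) hu1
    let ψ : A →+* Frac := IsLocalization.lift (M := Den) hu2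
    have hφ : ∀ q : Pol, φ (algebraMap Pol A q) = sub XX YY q := fun q => IsLocalization.lift_eq hu1 q
    have hψ : ∀ q : Pol, ψ (algebraMap Pol A q) = sub XX⁻¹ YY⁻¹ q :=
      fun q => IsLocalization.lift_eq hu2 q
    have hx1 : φ x = XX := by rw [hφ]; simp
    have hy1 : φ y = YY := by rw [hφ]; simp
    have hx2 : ψ x = XX⁻¹ := by rw [hψ]; simp
    have hy2 : ψ y = YY⁻¹ := by rw [hψ]; simp
    have e1 : ratFunSubst P XX YY / ratFunSubst Q XX YY = φ w := by
      rw [← sub_apply, ← sub_apply, div_eq_iff (hu1 Q).ne_zero, ← hφ, ← hφ, ← map_mul, hPQ]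
    have e2 : ratFunSubst P XX⁻¹ YY⁻¹ / ratFunSubst Q XX⁻¹ YY⁻¹ = ψ w := by
      rw [← sub_apply, ← sub_apply, div_eq_iff (hu2 Q).ne_zero, ← hψ, ← hψ, ← map_mul, hPQ]
    rw [e1, e2]
    have hG1 := hG.map φ
    have hG2 := hG.map ψ
    rw [hx1, hy1] at hG1
    rw [hx2, hy2] at hG2
    have fe := Sys.func_eq hf XX_ne_zero YY_ne_zero
      (fun i hi => by simpa using XY_ne_one i 0 (by omega))
      (fun a b hb => XY_ne_one a b (by omega)) hr hd hG1 hG2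
    have t1 := tr φ
    have t2 := tr ψ
    rw [hx1, hy1] at t1
    rw [hx2, hy2, fe] at t2
    set F1 := Ftot d (fun S m => φ (G S m))
    have hX := XX_ne_zero
    have hY := YY_ne_zero
    have p1 : (∏ i ∈ range (2 * d), (1 - XX⁻¹ ^ i * YY⁻¹)) * (XX ^ ((2 * d).choose 2) * YY ^ (2 * d)) =
        ∏ i ∈ range (2 * d), (1 - XX ^ i * YY) := by
      rw [prod_inv_aux, pow_mul]; simp
    have p2 : (∏ i, (1 - YY⁻¹ ^ (2 * f i))) * ((-1) ^ r * YY ^ (2 * d)) = ∏ i, (1 - YY ^ (2 * f i)) := by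
      have : ((-1) ^ r * YY ^ (2 * d) : Frac) = ∏ i : Fin r, (-1 * YY ^ (2 * f i)) := by
        rw [prod_mul_distrib, prod_const, card_univ, Fintype.card_fin, prod_pow_eq_pow_sum,
          ← mul_sum, hd]
      rw [this, ← prod_mul_distrib]
      refine prod_congr rfl fun i _ => ?_
      rw [inv_pow]
      field_simp
      ring
    have hch : (3 * d).choose 2 = (2 * d).choose 2 + (2 * d ^ 2 + d.choose 2) := by
      have := Nat.add_choose_eq (2 * d) d 2
      have h3 : 3 * d = 2 * d + d := by ring
      rw [h3, this]
      simp [Finset.Nat.antidiagonal_succ]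
      ring
    have hne : ∏ i ∈ range (2 * d), (1 - XX ^ i * YY) ≠ 0 := by
      refine prod_ne_zero_iff.2 fun i _ => sub_ne_zero.2 ?_
      have := XY_ne_one i 1 (by omega)
      rw [pow_one] at this
      exact this.symm
    refine mul_right_cancel₀ hne ?_
    have hr1 : ((-1) ^ r * (-1) ^ r : Frac) = 1 := by rw [← mul_pow]; simp
    have hd3 : ((-1) ^ (3 * d) : Frac) = (-1) ^ d := by
      rw [pow_mul]; norm_num
    rw [hd3]
    calc ψ w * ∏ i ∈ range (2 * d), (1 - XX ^ i * YY)
        = (ψ w * ∏ i ∈ range (2 * d), (1 - XX⁻¹ ^ i * YY⁻¹)) *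
            (XX ^ ((2 * d).choose 2) * YY ^ (2 * d)) := by rw [← p1]; ring
      _ = ((∏ i, (1 - YY⁻¹ ^ (2 * f i))) * ((-1) ^ r * YY ^ (2 * d))) *
          ((-1) ^ d * XX ^ ((2 * d).choose 2 + (2 * d ^ 2 + d.choose 2)) * YY ^ (5 * d) * F1) := by
        rw [t2, pow_add, pow_add XX]; ring
      _ = (-1) ^ d * XX ^ ((3 * d).choose 2) * YY ^ (5 * d) * φ w *
          ∏ i ∈ range (2 * d), (1 - XX ^ i * YY) := by
        rw [p2, hch, mul_assoc _ (φ w), t1]; ring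

end HeisZeta


open scoped NumberField in
/-- **Local normal zeta functions of Heisenberg groups over number rings**
(Schein–Voll). Fix `r` and `f = (f₁, …, f_r)`; set `d = f₁ + ⋯ + f_r`. There is a rational
function `W_f = P/Q ∈ ℚ(X,Y)` such that: (1) for every number field `K` of degree `d` and
every rational prime `p` which is unramified in `K` and decomposes into `r` distinct prime
ideals of inertia degrees `f₁, …, f_r`, the local normal zeta function of the Heisenberg group
`H(𝓞_K)` at `p` is `W_f(p, Y)`; and (2) `W_f(X⁻¹, Y⁻¹) = (-1)^{3d} X^{binom(3d,2)} Y^{5d} W_f(X,Y)`. -/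
theorem local_normal_zeta_heisenberg_number_ring
    (r : ℕ) (hr : 0 < r) (f : Fin r → ℕ) (hf : ∀ i, 0 < f i) (d : ℕ) (hd : d = ∑ i, f i) :
    ∃ P Q : MvPolynomial (Fin 2) ℚ, Q ≠ 0 ∧
      (∀ (K : Type) [Field K] [NumberField K], Module.finrank ℚ K = d →
        ∀ p : ℕ, p.Prime →
          ∀ 𝔓 : Fin r → Ideal (𝓞 K), Function.Injective 𝔓 →
            (∀ i, (𝔓 i).IsPrime) →
            (∀ i, Nat.card ((𝓞 K) ⧸ 𝔓 i) = p ^ f i) →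
            Ideal.span {(p : 𝓞 K)} = ∏ i, 𝔓 i →
              (evalAtPrime Q p).coeff 0 ≠ 0 ∧
              (PowerSeries.mk fun i => (normalSubgroupCount (Heisenberg (𝓞 K)) (p ^ i) : ℚ)) *
                  ((evalAtPrime Q p : Polynomial ℚ) : PowerSeries ℚ)
                = ((evalAtPrime P p : Polynomial ℚ) : PowerSeries ℚ)) ∧
      (let F := FractionRing (MvPolynomial (Fin 2) ℚ)
       let XX : F := algebraMap (MvPolynomial (Fin 2) ℚ) F (MvPolynomial.X 0)
       let YY : F := algebraMap (MvPolynomial (Fin 2) ℚ) F (MvPolynomial.X 1)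
       ratFunSubst P XX⁻¹ YY⁻¹ / ratFunSubst Q XX⁻¹ YY⁻¹ =
         (-1) ^ (3 * d) * XX ^ ((3 * d).choose 2) * YY ^ (5 * d) *
           (ratFunSubst P XX YY / ratFunSubst Q XX YY)) := by
  obtain ⟨P, Q, hQ, h1, h2⟩ := HeisZeta.main_of_series r hr f hf d hd
  refine ⟨P, Q, hQ, ?_, h2⟩
  intro K _ _ hK p hp 𝔓 hinj hprime hcard hspan
  have D : HeisZeta.Dec f p 𝔓 :=
    ⟨hp, hinj, hprime, hcard, hspan, Nat.cast_ne_zero.2 hp.ne_zero⟩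
  have hrk : Module.finrank ℤ (𝓞 K) = d := by
    rw [NumberField.RingOfIntegers.rank, hK]
  have : Infinite (𝓞 K) := Infinite.of_injective _ (Nat.cast_injective (R := 𝓞 K))
  exact h1 p hp _ (HeisZeta.GS f p 𝔓) (D.sys hf hrk) (D.zeta hf hd hrk)
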